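/- arXiv:2207.00393 — 12 statements merged into one kernel-verified Lean document; each statement's English description precedes it below -/
import Mathlib

section
/- Let p ≥ 0 be an integer and a_1,…,a_p, b ∈ ℂ, with b + j ≠ 0 for every integer j ≥ 1. Let v : ℕ → ℂ be any sequence satisfying v_{n+1} = ((n+1)/(n+b+1))·v_n for all n ∈ ℕ. Then for every n ∈ ℕ, (Q_p v)_n = [ (a_1−b)(a_2−b)⋯(a_p−b) / ((n+b+1)(n+b+2)⋯(n+b+p)) ] · v_n. (This is the computation, from the proof of Lemma 2.1, of the remainder R_{p,b}(n) of the right division of Q_p by S_n − (n+1)/(n+b+1).) -/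
noncomputable section

open Finset

/-- Pochhammer symbol `(a)_k = a (a+1) ⋯ (a+k-1)`, with `(a)_0 = 1`. -/
def poch (a : ℂ) : ℕ → ℂ
  | 0 => 1
  | k + 1 => poch a k * (a + k)

/-- The first-order recurrence operator `T_j` with parameter `aj`:
`(T_j u)_n = ((n + aj + j)/(n+1)) u_{n+1} - u_n`. -/
def Trec (aj : ℂ) (j : ℕ) (u : ℕ → ℂ) : ℕ → ℂ := fun n =>
  (((n : ℂ) + aj + j) / ((n : ℂ) + 1)) * u (n + 1) - u n

/-- `Q_p = T_p ∘ T_{p-1} ∘ ⋯ ∘ T_1`, where `T_j` has parameter `a_j = a (j-1)`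
(for `p = 0`, `Q_0` is the identity). -/
def Qop (a : ℕ → ℂ) : ℕ → (ℕ → ℂ) → (ℕ → ℂ)
  | 0 => id
  | p + 1 => Trec (a p) (p + 1) ∘ Qop a p

/-!
A solution `u` of `(n + c + 1) u_{n+1} = (n + 1) u_n` satisfies
`(T_j u)_n = (a_j + j - (c + 1)) u_{n+1} / (n + 1)`, and `n ↦ u_{n+1} / (n + 1)` solves the same
recurrence with `c + 1` in place of `c`. Starting from `c = b`, the operator `T_j` is thus applied
to a solution of parameter `b + j - 1`, on which `(n + b + j) T_j` is multiplication by `a_j - b`;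
these factors accumulate to the two products.
-/

/-- `v` is annihilated by the recurrence operator `(n + b + 1) S_n - (n + 1)`. This is
`S_n - (n + 1) / (n + b + 1)` with its denominator cleared, so that the notion remains
meaningful when `b` is a negative integer. -/
def SolvesRec (b : ℂ) (v : ℕ → ℂ) : Prop :=
  ∀ n : ℕ, ((n : ℂ) + b + 1) * v (n + 1) = ((n : ℂ) + 1) * v n

theorem solvesRec_iff_eq_div_mul {b : ℂ} {v : ℕ → ℂ} (hb : ∀ n : ℕ, (n : ℂ) + b + 1 ≠ 0) :
    SolvesRec b v ↔ ∀ n : ℕ, v (n + 1) = (((n : ℂ) + 1) / ((n : ℂ) + b + 1)) * v n :=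
  forall_congr' fun n => by rw [div_mul_eq_mul_div, eq_div_iff (hb n), mul_comm (v (n + 1))]

namespace SolvesRec

variable {b : ℂ} {v : ℕ → ℂ}

theorem trec_apply (hv : SolvesRec b v) (α : ℂ) (j n : ℕ) :
    Trec α j v n = (α + j - (b + 1)) * (v (n + 1) / ((n : ℂ) + 1)) := by
  have hn : (n : ℂ) + 1 ≠ 0 := Nat.cast_add_one_ne_zero n
  rw [Trec]
  field_simp
  linear_combination hv n

theorem mul_trec_apply (hv : SolvesRec b v) (α : ℂ) (j n : ℕ) :
    ((n : ℂ) + b + 1) * Trec α j v n = (α + j - (b + 1)) * v n := by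
  have hn : (n : ℂ) + 1 ≠ 0 := Nat.cast_add_one_ne_zero n
  rw [hv.trec_apply, mul_left_comm, mul_div_assoc', hv n, mul_div_cancel_left₀ _ hn]

theorem trec (hv : SolvesRec b v) (α : ℂ) (j : ℕ) : SolvesRec (b + 1) (Trec α j v) := fun n => by
  have hn : (n : ℂ) + 1 ≠ 0 := Nat.cast_add_one_ne_zero n
  calc ((n : ℂ) + (b + 1) + 1) * Trec α j v (n + 1)
      = (((n + 1 : ℕ) : ℂ) + b + 1) * Trec α j v (n + 1) := by push_cast; ring
    _ = (α + j - (b + 1)) * v (n + 1) := hv.mul_trec_apply α j (n + 1)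
    _ = ((n : ℂ) + 1) * Trec α j v n := by
      rw [hv.trec_apply, mul_left_comm, mul_div_cancel₀ _ hn]

theorem qop (hv : SolvesRec b v) (a : ℕ → ℂ) : ∀ p : ℕ, SolvesRec (b + p) (Qop a p v)
  | 0 => by simpa [Qop] using hv
  | p + 1 => by simpa [Qop, add_assoc] using (hv.qop a p).trec (a p) (p + 1)

theorem mul_qop_succ_apply (hv : SolvesRec b v) (a : ℕ → ℂ) (p n : ℕ) :
    ((n : ℂ) + b + 1 + p) * Qop a (p + 1) v n = (a p - b) * Qop a p v n := by
  have h := (hv.qop a p).mul_trec_apply (a p) (p + 1) n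
  push_cast at h
  rw [Qop, Function.comp_apply]
  linear_combination h

end SolvesRec

theorem remainder_of_Qp_general (p : ℕ) (a : ℕ → ℂ) {b : ℂ} {v : ℕ → ℂ} (hv : SolvesRec b v)
    (n : ℕ) :
    (∏ i ∈ range p, ((n : ℂ) + b + 1 + i)) * Qop a p v n =
      (∏ i ∈ range p, (a i - b)) * v n := by
  induction p with
  | zero => simp [Qop]
  | succ p ih =>
    rw [prod_range_succ, mul_assoc, hv.mul_qop_succ_apply, mul_left_comm, ih, prod_range_succ]
    ring

/-- Computation of the remainder `R_{p,b}(n)` of the right division of `Q_p` by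
`S_n - (n+1)/(n+b+1)` (from the proof of Lemma 2.1): if
`v_{n+1} = ((n+1)/(n+b+1)) v_n` for all `n`, then
`(Q_p v)_n = ((a_1-b)⋯(a_p-b) / ((n+b+1)⋯(n+b+p))) v_n`. -/
theorem remainder_of_Qp (p : ℕ) (a : ℕ → ℂ) (b : ℂ)
    (hb : ∀ j : ℕ, b + (j + 1 : ℂ) ≠ 0)
    (v : ℕ → ℂ)
    (hv : ∀ n : ℕ, v (n + 1) = (((n : ℂ) + 1) / ((n : ℂ) + b + 1)) * v n) :
    ∀ n : ℕ,
      Qop a p v n =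
        ((∏ i ∈ range p, (a i - b)) / (∏ i ∈ range p, ((n : ℂ) + b + 1 + i))) * v n := by
  have hne (m : ℕ) : (m : ℂ) + b + 1 ≠ 0 := by simpa only [add_left_comm, add_assoc] using hb m
  have hprod (n : ℕ) : ∏ i ∈ range p, ((n : ℂ) + b + 1 + i) ≠ 0 :=
    prod_ne_zero_iff.mpr fun i _ => by
      simpa only [Nat.cast_add, add_right_comm] using hne (n + i)
  intro n
  rw [div_mul_eq_mul_div, eq_div_iff (hprod n), mul_comm]
  exact remainder_of_Qp_general p a ((solvesRec_iff_eq_div_mul hne).mpr hv) n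
end
end

section
/- Let p ≥ 1 be an integer and a_1,…,a_p ∈ ℂ with a_i + j ≠ 0 for every i ∈ {1,…,p} and every integer j ≥ 1. For each i, let v^{(i)} : ℕ → ℂ satisfy v^{(i)}_{n+1} = ((n+1)/(n+a_i+1))·v^{(i)}_n for all n ∈ ℕ (for instance v^{(i)}_n = n!/(a_i+1)_n). Then Q_p annihilates each v^{(i)}: for every i ∈ {1,…,p} and every n ∈ ℕ, (Q_p v^{(i)})_n = 0. (Part of Lemma 2.1: Q_p is a common left multiple of the operators ((n+a_i+1)/(n+1))S_n − 1.) -/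
noncomputable section

open Finset

/-!
Write `T_{b,j}` for `Trec b j`. Expanding `T_{b,j+1} ∘ T_{c,j}` as an operator of order two gives
coefficients symmetric in `b` and `c`, so `T_{b,j+1} ∘ T_{c,j} = T_{c,j+1} ∘ T_{b,j}`. Applying
this exchange repeatedly carries the parameter `a_i` of any factor of `Q_p` to the rightmost place:
`Q_p` has `T_{a_i,1} = ((n+a_i+1)/(n+1)) S_n - 1` as a right factor.
-/

lemma Trec_zero (c : ℂ) (j : ℕ) : Trec c j 0 = 0 := by
  ext n
  simp [Trec]

lemma Trec_add_natCast (c : ℂ) (j k : ℕ) : Trec (c + k) j = Trec c (j + k) := by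
  ext u n
  simp only [Trec]
  push_cast
  ring

lemma Trec_succ_comp_Trec_comm (b c : ℂ) (j : ℕ) :
    Trec b (j + 1) ∘ Trec c j = Trec c (j + 1) ∘ Trec b j := by
  ext u n
  simp only [Function.comp_apply, Trec]
  push_cast
  ring

lemma Qop_zero (a : ℕ → ℂ) (p : ℕ) : Qop a p 0 = 0 := by
  induction p with
  | zero => rfl
  | succ p ih => simp only [Qop, Function.comp_apply, ih, Trec_zero]

lemma Qop_add (a : ℕ → ℂ) (p q : ℕ) :
    Qop a (p + q) = Qop (fun k ↦ a (p + k) + p) q ∘ Qop a p := by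
  induction q with
  | zero => rfl
  | succ q ih =>
    calc Qop a (p + (q + 1))
      _ = Trec (a (p + q)) (p + q + 1) ∘ Qop a (p + q) := rfl
      _ = Trec (a (p + q) + p) (q + 1) ∘ Qop (fun k ↦ a (p + k) + p) q ∘ Qop a p := by
        rw [ih, Trec_add_natCast, add_comm (q + 1) p, add_assoc]
      _ = Qop (fun k ↦ a (p + k) + p) (q + 1) ∘ Qop a p := rfl

lemma Trec_comp_Qop (a : ℕ → ℂ) (b : ℂ) (p : ℕ) :
    Trec b (p + 1) ∘ Qop a p = Qop (fun k ↦ a k + 1) p ∘ Trec b 1 := by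
  induction p with
  | zero => rfl
  | succ p ih =>
    have shift : Trec (a p) (p + 2) = Trec (a p + 1) (p + 1) := by
      simpa only [Nat.cast_one] using (Trec_add_natCast (a p) (p + 1) 1).symm
    calc Trec b (p + 2) ∘ Trec (a p) (p + 1) ∘ Qop a p
      _ = Trec (a p) (p + 2) ∘ Trec b (p + 1) ∘ Qop a p := by
        rw [← Function.comp_assoc, Trec_succ_comp_Trec_comm, Function.comp_assoc]
      _ = Trec (a p + 1) (p + 1) ∘ Qop (fun k ↦ a k + 1) p ∘ Trec b 1 := by
        rw [ih, shift]

lemma Qop_eq_comp_Trec_one (a : ℕ → ℂ) (i q : ℕ) :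
    Qop a (i + 1 + q) = Qop (fun k ↦ a (i + 1 + k) + (i + 1 : ℕ)) q ∘
      Qop (fun k ↦ a k + 1) i ∘ Trec (a i) 1 := by
  rw [Qop_add, ← Trec_comp_Qop]
  rfl

lemma Trec_one_eq_zero_iff {b : ℂ} {u : ℕ → ℂ} (hb : ∀ n : ℕ, (n : ℂ) + b + 1 ≠ 0) :
    Trec b 1 u = 0 ↔ ∀ n : ℕ, u (n + 1) = ((n : ℂ) + 1) / ((n : ℂ) + b + 1) * u n := by
  refine funext_iff.trans (forall_congr' fun n ↦ ?_)
  have hn : (n : ℂ) + 1 ≠ 0 := Nat.cast_add_one_ne_zero n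
  have hbn := hb n
  simp only [Trec, Pi.zero_apply, Nat.cast_one, sub_eq_zero]
  field_simp

theorem Qp_annihilates_general {p i : ℕ} (hi : i < p) (a : ℕ → ℂ) {u : ℕ → ℂ}
    (hu : Trec (a i) 1 u = 0) : Qop a p u = 0 := by
  obtain ⟨q, rfl⟩ := Nat.exists_eq_add_of_le (Nat.succ_le_of_lt hi)
  simp only [Nat.succ_eq_add_one, Qop_eq_comp_Trec_one, Function.comp_apply, hu, Qop_zero]

/-- Part of Lemma 2.1: `Q_p` is a common left multiple of the operators
`((n+a_i+1)/(n+1)) S_n - 1`; it annihilates every sequence `v` with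
`v_{n+1} = ((n+1)/(n+a_i+1)) v_n`. -/
theorem Qp_annihilates (p : ℕ) (hp : 1 ≤ p) (a : ℕ → ℂ)
    (ha : ∀ i < p, ∀ j : ℕ, a i + (j + 1 : ℂ) ≠ 0)
    (v : ℕ → ℕ → ℂ)
    (hv : ∀ i < p, ∀ n : ℕ,
      v i (n + 1) = (((n : ℂ) + 1) / ((n : ℂ) + a i + 1)) * v i n) :
    ∀ i < p, ∀ n : ℕ, Qop a p (v i) n = 0 := by
  intro i hi n
  have hb (m : ℕ) : (m : ℂ) + a i + 1 ≠ 0 := by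
    convert ha i hi m using 1
    ring
  exact congrFun (Qp_annihilates_general hi a ((Trec_one_eq_zero_iff hb).2 (hv i hi))) n
end
end

section
/- Let p ≥ 1 be an integer and a_1,…,a_p ∈ ℂ pairwise distinct with a_i + j ≠ 0 for every i and every integer j ≥ 1. For each i, let v^{(i)} : ℕ → ℂ be defined by v^{(i)}_0 = 1 and v^{(i)}_{n+1} = ((n+1)/(n+a_i+1))·v^{(i)}_n (so v^{(i)}_n = n!/(a_i+1)_n). Then no nonzero recurrence operator of order less than p with rational function coefficients annihilates all of v^{(1)},…,v^{(p)}: if r_0,…,r_{p−1} ∈ ℂ(n) are rational functions such that Σ_{m=0}^{p−1} r_m(n)·v^{(i)}_{n+m} = 0 for all sufficiently large n and all i ∈ {1,…,p}, then r_0 = ⋯ = r_{p−1} = 0. (This is the minimality part of Lemma 2.1: Q_p, which has order p and annihilates all the v^{(i)}, is the least common left multiple of the operators ((n+a_i+1)/(n+1))S_n − 1.) -/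
noncomputable section

open Finset

/-- The sequence `v^{(i)}` with `v^{(i)}_0 = 1` and
`v^{(i)}_{n+1} = ((n+1)/(n+a_i+1)) v^{(i)}_n`, i.e. `v^{(i)}_n = n!/(a_i+1)_n`. -/
def vseq (ai : ℂ) : ℕ → ℂ
  | 0 => 1
  | n + 1 => (((n : ℂ) + 1) / ((n : ℂ) + ai + 1)) * vseq ai n

/-!
At each `n` the Casoratian `det (v⁽ⁱ⁾_{n+m})` is nonzero, so a relation of order less than `p` at
infinitely many `n` forces every coefficient to vanish at infinitely many points. Indeed, with
`N = n + p - 1`, running the recurrence downwards from `N` gives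
`v⁽ⁱ⁾_{N-k} = v⁽ⁱ⁾_N · (N + aᵢ)(N + aᵢ - 1)⋯(N + aᵢ - k + 1) / (N(N - 1)⋯(N - k + 1))`.
Up to nonzero row and column factors the matrix therefore has as entries the monic polynomials
`x(x - 1)⋯(x - k + 1)`, `k < p`, at the `p` distinct points `N + aᵢ`, and its determinant is that
of a Vandermonde matrix.
-/

open Polynomial Filter Matrix

section Casoratian

variable {R : Type*} [CommRing R]

/-- The Casorati matrix of the sequences `v 0, …, v (p - 1)` at `n`: row `i` holds the `p`
consecutive terms of `v i` that start at index `n`. Its determinant, the Casoratian, is the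
discrete analogue of the Wronskian. -/
def casoratiMatrix {p : ℕ} (v : Fin p → ℕ → R) (n : ℕ) : Matrix (Fin p) (Fin p) R :=
  of fun i m => v i (n + m)

lemma det_eval_monic_ne_zero [IsDomain R] {p : ℕ} {x : Fin p → R} (hx : Function.Injective x)
    {P : Fin p → R[X]} (hdeg : ∀ k, (P k).natDegree = k) (hmonic : ∀ k, (P k).Monic) :
    (of fun i k => (P k).eval (x i)).det ≠ 0 :=
  det_eval_matrixOfPolynomials_eq_det_vandermonde x P hdeg hmonic ▸
    det_vandermonde_ne_zero_iff.2 hx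

lemma descFactorial_mul_eq_eval_descPochhammer_mul {a : R} {v : ℕ → R}
    (hv : ∀ n : ℕ, (n + a + 1) * v (n + 1) = (n + 1) * v n) (n k : ℕ) :
    ((n + k).descFactorial k : R) * v n =
      (descPochhammer R k).eval (((n + k : ℕ) : R) + a) * v (n + k) := by
  induction k with
  | zero => simp
  | succ k ih =>
    have hshift : (((n + (k + 1) : ℕ) : R) + a) - 1 = ((n + k : ℕ) : R) + a := by
      push_cast; ring
    have hrec := hv (n + k)
    rw [descPochhammer_succ_left, eval_mul, eval_comp, eval_sub, eval_X, eval_one, hshift,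
      ← add_assoc, Nat.succ_descFactorial_succ]
    push_cast at ih hrec ⊢
    linear_combination ((n : R) + k + 1) * ih -
      (descPochhammer R k).eval ((n : R) + k + a) * hrec

variable [IsDomain R] [CharZero R]

lemma ne_zero_of_recurrence {a : R} {v : ℕ → R} (hv₀ : v 0 ≠ 0)
    (hv : ∀ n : ℕ, (n + a + 1) * v (n + 1) = (n + 1) * v n) (n : ℕ) : v n ≠ 0 := by
  induction n with
  | zero => exact hv₀
  | succ n ih =>
    have hprod : (n + a + 1) * v (n + 1) ≠ 0 := hv n ▸ mul_ne_zero n.cast_add_one_ne_zero ih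
    exact right_ne_zero_of_mul hprod

lemma det_casoratiMatrix_ne_zero {p : ℕ} {a : Fin p → R} (ha : Function.Injective a)
    {v : Fin p → ℕ → R} (hv₀ : ∀ i, v i 0 ≠ 0)
    (hv : ∀ i, ∀ n : ℕ, (n + a i + 1) * v i (n + 1) = (n + 1) * v i n) (n : ℕ) :
    (casoratiMatrix v n).det ≠ 0 := by
  set N := n + (p - 1)
  let E : Matrix (Fin p) (Fin p) R := of fun i k => (descPochhammer R k).eval (N + a i)
  have hfactor : casoratiMatrix v n * diagonal (fun m => (N.descFactorial m.rev : R)) =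
      diagonal (fun i => v i N) * E.submatrix id Fin.revPerm := by
    ext i m
    have hN : n + (m : ℕ) + (m.rev : ℕ) = N := by grind
    have h := descFactorial_mul_eq_eval_descPochhammer_mul (hv i) (n + m) m.rev
    rw [hN] at h
    simpa [casoratiMatrix, E, mul_comm] using h
  have hE : E.det ≠ 0 :=
    det_eval_monic_ne_zero (fun _ _ hij => ha (add_left_cancel hij))
      (fun k => descPochhammer_natDegree R k) (fun k => monic_descPochhammer R k)
  have hright : (diagonal (fun i => v i N) * E.submatrix id Fin.revPerm).det ≠ 0 := by
    rw [det_mul, det_diagonal, det_permute']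
    exact mul_ne_zero (prod_ne_zero_iff.2 fun i _ => ne_zero_of_recurrence (hv₀ i) (hv i) N)
      (mul_ne_zero (by simp) hE)
  rw [← hfactor, det_mul] at hright
  exact left_ne_zero_of_mul hright

end Casoratian

section RationalFunction

universe u

variable {K L : Type u} [Field K] [Field L]

lemma ratFunc_eq_zero_of_infinite_eval_eq_zero (σ : K →+* L) {f : RatFunc K}
    (h : {x | f.eval σ x = 0}.Infinite) : f = 0 := by
  -- `RatFunc.eval` is `0` at a pole, so such an `x` is a root of the numerator or the denominator.
  have hroot : ∀ x ∈ {x | f.eval σ x = 0}, ((f.num * f.denom).map σ).IsRoot x := by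
    intro x hx
    simpa [RatFunc.eval, eval_map] using hx
  have hmap : (f.num * f.denom).map σ = 0 := eq_zero_of_infinite_isRoot _ (h.mono hroot)
  have hprod : f.num * f.denom = 0 := (Polynomial.map_eq_zero σ).1 hmap
  exact RatFunc.num_eq_zero_iff.1 ((mul_eq_zero.1 hprod).resolve_right f.denom_ne_zero)

lemma ratFunc_eq_zero_of_frequently_eval_natCast_eq_zero [CharZero L] (σ : K →+* L)
    {f : RatFunc K} (h : ∃ᶠ n : ℕ in atTop, f.eval σ n = 0) : f = 0 := by
  have hinf := (Nat.frequently_atTop_iff_infinite.1 h).image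
    (Nat.cast_injective (R := L)).injOn
  refine ratFunc_eq_zero_of_infinite_eval_eq_zero σ (hinf.mono ?_)
  rintro _ ⟨n, hn, rfl⟩
  exact hn

theorem no_lower_order_annihilator_general [CharZero K] {p : ℕ} {a : Fin p → K}
    (ha : Function.Injective a) {v : Fin p → ℕ → K} (hv₀ : ∀ i, v i 0 ≠ 0)
    (hv : ∀ i, ∀ n : ℕ, (n + a i + 1) * v i (n + 1) = (n + 1) * v i n) {r : Fin p → RatFunc K}
    (hrel : ∃ᶠ n : ℕ in atTop, ∀ i, ∑ m, (r m).eval (RingHom.id K) n * v i (n + m) = 0) :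
    r = 0 := by
  funext m
  refine ratFunc_eq_zero_of_frequently_eval_natCast_eq_zero (RingHom.id K)
    (hrel.mono fun n hn => ?_)
  have hker : casoratiMatrix v n *ᵥ (fun m => (r m).eval (RingHom.id K) n) = 0 := by
    ext i
    simpa [casoratiMatrix, mulVec, dotProduct, mul_comm] using hn i
  exact congrFun (eq_zero_of_mulVec_eq_zero (det_casoratiMatrix_ne_zero ha hv₀ hv n) hker) m

end RationalFunction

lemma vseq_recurrence {a : ℂ} {n : ℕ} (ha : a + (n + 1 : ℂ) ≠ 0) :
    (n + a + 1) * vseq a (n + 1) = (n + 1) * vseq a n := by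
  have hden : (n : ℂ) + a + 1 ≠ 0 := by
    rwa [add_comm (n : ℂ), add_assoc]
  rw [vseq, ← mul_assoc, mul_div_cancel₀ _ hden]

/-- Minimality part of Lemma 2.1: no nonzero recurrence operator of order less
than `p` with rational-function coefficients annihilates all of
`v^{(1)}, …, v^{(p)}`. -/
theorem no_lower_order_annihilator (p : ℕ) (hp : 1 ≤ p) (a : ℕ → ℂ)
    (hdist : ∀ i < p, ∀ j < p, i ≠ j → a i ≠ a j)
    (ha : ∀ i < p, ∀ j : ℕ, a i + (j + 1 : ℂ) ≠ 0)
    (r : ℕ → RatFunc ℂ)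
    (hrel : ∃ N : ℕ, ∀ n : ℕ, N ≤ n → ∀ i < p,
      ∑ m ∈ range p, RatFunc.eval (RingHom.id ℂ) (n : ℂ) (r m) * vseq (a i) (n + m) = 0) :
    ∀ m < p, r m = 0 := by
  obtain ⟨N, hN⟩ := hrel
  have hinj : Function.Injective fun i : Fin p => a i := fun i j hij =>
    Fin.ext (by_contra fun hne => hdist i i.2 j j.2 hne hij)
  have hr : (fun m : Fin p => r m) = 0 :=
    no_lower_order_annihilator_general hinj (v := fun i => vseq (a i))
      (fun _ => one_ne_zero) (fun i n => vseq_recurrence (ha i i.2 n))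
      (eventually_atTop.2 ⟨N, fun n hn i => by simpa [sum_range] using hN n hn i i.2⟩).frequently
  exact fun m hm => congrFun hr ⟨m, hm⟩
end
end

section
/- Let p ≥ 0 be an integer and a_1,…,a_p ∈ ℂ arbitrary (not depending on n). For n ∈ ℕ and 0 ≤ m ≤ p such that n + m + a_i ≠ 0 for all i ∈ {1,…,p}, define c_m(n) = Σ_{k=0}^{p−m} [ (m−p)_k / k! ] · Π_{i=1}^{p} (n+m+a_i+k)/(n+m+a_i) (a terminating hypergeometric sum, equal to the value at 1 of the series {}_{p+1}F_p with upper parameters m−p, n+m+a_1+1, …, n+m+a_p+1 and lower parameters n+m+a_1, …, n+m+a_p). Then for every sequence u : ℕ → ℂ and every n ∈ ℕ such that n + m + a_i ≠ 0 for all i and all 0 ≤ m ≤ p, (Q_p u)_n = Σ_{m=0}^{p} [ c_m(n)/(p−m)! ] · [ Π_{i=1}^{p} (n+a_i+m) / Π_{i=1}^{m} (n+i) ] · u_{n+m}. (Lemma 2.2: explicit expansion of Q_p in powers of the shift.) -/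
/-!
Let `S` be the normalized shift `(S u)_n = u_{n+1} / (n+1)`, so that `T_j = (n + a_j + j) S - 1`.
Formally `e^{S⁻¹} n e^{-S⁻¹} = n - S⁻¹`, hence `T_j = e^{S⁻¹} (n + a_j + j) e^{-S⁻¹} S`. Moving all
shifts to the right gives `Q_p = e^{S⁻¹} P(n + p) e^{-S⁻¹} S^p` with `P(x) = ∏ (x + a_i)`, in which
the coefficient of `S^m` is `(-1)^q Δ^q P(n + m) / q!` for `q = p - m`. It vanishes for `m < 0`
because `deg P = p`, and it is the hypergeometric sum `c_m(n)` times `P(n + m) / (p - m)!`.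
Given this formula, induction on `p` needs only the Leibniz rule for `Δ^q ((x + c) f)` and
`Δ^(p+1) P = 0`.
-/

noncomputable section

open Finset

/-- The terminating hypergeometric sum
`c_m(n) = Σ_{k=0}^{p−m} ((m−p)_k / k!) Π_{i=1}^{p} (n+m+a_i+k)/(n+m+a_i)`,
the value at 1 of `_{p+1}F_p` with upper parameters `m−p, n+m+a_1+1, …, n+m+a_p+1`
and lower parameters `n+m+a_1, …, n+m+a_p`. -/
def ccoef (a : ℕ → ℂ) (p m : ℕ) (n : ℂ) : ℂ :=
  ∑ k ∈ range (p - m + 1),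
    poch ((m : ℂ) - (p : ℂ)) k / (Nat.factorial k : ℂ) *
      ∏ i ∈ range p, (n + m + a i + k) / (n + m + a i)

section ForwardDifference

variable {R : Type*} [CommRing R]

lemma fwdDiff_iter_succ_add_const_mul (h c : R) (f : R → R) (q : ℕ) (x : R) :
    (fwdDiff h)^[q + 1] (fun y ↦ (y + c) * f y) x =
      (x + c + (q + 1) * h) * (fwdDiff h)^[q + 1] f x + (q + 1) * h * (fwdDiff h)^[q] f x := by
  induction q generalizing x with
  | zero =>
    simp only [zero_add, Function.iterate_one, Function.iterate_zero, id_eq, fwdDiff, Nat.cast_zero]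
    ring
  | succ q ih =>
    have shift (k : ℕ) :
        (fwdDiff h)^[k] f (x + h) = (fwdDiff h)^[k] f x + (fwdDiff h)^[k + 1] f x := by
      rw [Function.iterate_succ_apply', fwdDiff, add_sub_cancel]
    rw [Function.iterate_succ_apply', fwdDiff, ih, ih, shift, shift]
    push_cast
    ring

open Polynomial in
lemma fwdDiff_iter_prod_add_eq_zero {ι : Type*} (s : Finset ι) (a : ι → R) {q : ℕ}
    (hq : #s < q) : (fwdDiff 1)^[q] (fun x ↦ ∏ i ∈ s, (x + a i)) = 0 := by
  have natDegree_lt : (∏ i ∈ s, (X + C (a i))).natDegree < q :=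
    calc (∏ i ∈ s, (X + C (a i))).natDegree
        ≤ ∑ i ∈ s, (X + C (a i)).natDegree := natDegree_prod_le _ _
      _ ≤ #s • 1 := sum_le_card_nsmul s _ 1 fun i _ ↦ natDegree_add_C.trans_le natDegree_X_le
      _ < q := by simpa using hq
  simpa [funext_iff, eval_prod] using fwdDiff_iter_eq_zero_of_degree_lt natDegree_lt

lemma neg_one_pow_mul_fwdDiff_iter (f : R → R) (q : ℕ) (x : R) :
    (-1) ^ q * (fwdDiff 1)^[q] f x =
      ∑ k ∈ range (q + 1), (-1) ^ k * (q.choose k : R) * f (x + k) := by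
  rw [fwdDiff_iter_eq_sum_shift, mul_sum]
  refine sum_congr rfl fun k hk ↦ ?_
  have sign : (-1 : R) ^ q * (-1) ^ (q - k) = (-1) ^ k := by
    obtain ⟨r, rfl⟩ := Nat.exists_eq_add_of_le (mem_range_succ_iff.mp hk)
    rw [Nat.add_sub_cancel_left, pow_add, mul_assoc, ← mul_pow]
    simp
  rw [← sign, nsmul_one, zsmul_eq_mul]
  push_cast
  ring

end ForwardDifference

section NewtonOperator

variable {K : Type*} [Field K]

/-- The coefficient `(-1)^q Δ^q f(x) / q!` of the Newton expansion of `f` at `x`, with alternating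
sign. For a shift `S` it is the coefficient of `S^(-q)` in `e^{S⁻¹} f(n) e^{-S⁻¹}` at
`n = x + q`. -/
def signedNewtonCoeff (f : K → K) (q : ℕ) (x : K) : K :=
  (-1) ^ q * (fwdDiff 1)^[q] f x / (q.factorial : K)

lemma signedNewtonCoeff_zero (f : K → K) (x : K) : signedNewtonCoeff f 0 x = f x := by
  simp [signedNewtonCoeff]

lemma signedNewtonCoeff_succ_add_const_mul [CharZero K] (c : K) (f : K → K) (q : ℕ) (x : K) :
    signedNewtonCoeff (fun y ↦ (y + c) * f y) (q + 1) x =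
      (x + c + (q + 1)) * signedNewtonCoeff f (q + 1) x - signedNewtonCoeff f q x := by
  have succ_ne_zero : (q + 1 : K) ≠ 0 := q.cast_add_one_ne_zero
  simp only [signedNewtonCoeff, fwdDiff_iter_succ_add_const_mul, Nat.factorial_succ, Nat.cast_mul,
    Nat.cast_succ]
  field_simp
  ring

/-- The shift operator `S` normalized so that `S^m` takes `u` to
`n ↦ u_{n+m} / ((n+1) ⋯ (n+m))`. -/
def normalizedShift (u : ℕ → K) : ℕ → K := fun n ↦ u (n + 1) / (n + 1)

lemma normalizedShift_iterate_apply (u : ℕ → K) (m n : ℕ) :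
    normalizedShift^[m] u n = u (n + m) / ∏ i ∈ range m, ((n : K) + (i + 1)) := by
  induction m generalizing n with
  | zero => simp
  | succ m ih =>
    have prod_split : ∏ i ∈ range (m + 1), ((n : K) + (i + 1)) =
        (∏ i ∈ range m, (((n + 1 : ℕ) : K) + (i + 1))) * (n + 1) := by
      rw [prod_range_succ']
      push_cast
      simp only [add_comm, add_left_comm, zero_add]
    rw [Function.iterate_succ_apply', normalizedShift, ih, prod_split, div_div,
      add_right_comm, add_assoc]

/-- The recurrence operator `e^{S⁻¹} f(n + p) e^{-S⁻¹} S^p` truncated to nonnegative powers of the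
normalized shift `S`: a pair `(m, q)` with `m + q = p` contributes the term of order `S^m`. -/
def newtonOperator (f : K → K) (p : ℕ) (u : ℕ → K) : ℕ → K := fun n ↦
  ∑ mq ∈ antidiagonal p, signedNewtonCoeff f mq.2 (n + mq.1) * normalizedShift^[mq.1] u n

lemma newtonOperator_succ_add_const_mul [CharZero K] (c : K) (f : K → K) (p : ℕ) (u : ℕ → K)
    (n : ℕ) :
    newtonOperator (fun y ↦ (y + c) * f y) (p + 1) u n =
      (n + c + (p + 1)) * newtonOperator f (p + 1) u n - newtonOperator f p u n := by
  have coeff_succ : ∀ mq ∈ antidiagonal p,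
      signedNewtonCoeff (fun y ↦ (y + c) * f y) (mq.2 + 1) (n + mq.1) =
        (n + c + (p + 1)) * signedNewtonCoeff f (mq.2 + 1) (n + mq.1) -
          signedNewtonCoeff f mq.2 (n + mq.1) := by
    intro mq hmq
    rw [signedNewtonCoeff_succ_add_const_mul, ← mem_antidiagonal.mp hmq]
    push_cast
    ring
  simp only [newtonOperator, Nat.sum_antidiagonal_succ', signedNewtonCoeff_zero]
  rw [sum_congr rfl fun mq hmq ↦ by rw [coeff_succ mq hmq, sub_mul, mul_assoc],
    sum_sub_distrib, ← mul_sum]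
  push_cast
  ring

lemma newtonOperator_succ_eq_normalizedShift {f : K → K} {p : ℕ} (hf : (fwdDiff 1)^[p + 1] f = 0)
    (u : ℕ → K) : newtonOperator f (p + 1) u = normalizedShift (newtonOperator f p u) := by
  ext n
  have coeff_zero : signedNewtonCoeff f (p + 1) (n + (0 : ℕ)) = 0 := by
    simp [signedNewtonCoeff, hf]
  rw [newtonOperator, Nat.sum_antidiagonal_succ, coeff_zero, zero_mul, zero_add, normalizedShift,
    newtonOperator, sum_div]
  refine sum_congr rfl fun mq _ ↦ ?_
  rw [Function.iterate_succ_apply', normalizedShift, mul_div_assoc]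
  push_cast
  rw [add_right_comm, add_assoc]

end NewtonOperator

lemma Trec_apply (b : ℂ) (j : ℕ) (u : ℕ → ℂ) (n : ℕ) :
    Trec b j u n = (n + b + j) * normalizedShift u n - u n := by
  rw [Trec, normalizedShift, div_mul_eq_mul_div, mul_div_assoc]

theorem Qop_eq_newtonOperator (a : ℕ → ℂ) (p : ℕ) :
    Qop a p = newtonOperator (fun x ↦ ∏ i ∈ range p, (x + a i)) p := by
  induction p with
  | zero =>
    ext u n
    simp [Qop, newtonOperator, signedNewtonCoeff_zero]
  | succ p ih =>
    ext u n
    have vanish : (fwdDiff 1)^[p + 1] (fun x ↦ ∏ i ∈ range p, (x + a i)) = 0 :=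
      fwdDiff_iter_prod_add_eq_zero _ _ (by simp)
    simp only [prod_range_succ_comm _ p]
    rw [newtonOperator_succ_add_const_mul, newtonOperator_succ_eq_normalizedShift vanish, ← ih,
      Qop, Function.comp_apply, Trec_apply, Nat.cast_succ]

lemma poch_eq_ascPochhammer_eval (z : ℂ) (k : ℕ) : poch z k = (ascPochhammer ℂ k).eval z := by
  induction k with
  | zero => simp [poch]
  | succ k ih => rw [poch, ih, ascPochhammer_succ_eval]

lemma poch_neg_natCast_div_factorial (q k : ℕ) :
    poch (-(q : ℂ)) k / (k.factorial : ℂ) = (-1) ^ k * (q.choose k : ℂ) := by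
  have factorial_ne_zero : (k.factorial : ℂ) ≠ 0 := mod_cast k.factorial_ne_zero
  rw [poch_eq_ascPochhammer_eval, ascPochhammer_eval_neg_eq_descPochhammer,
    descPochhammer_eval_eq_descFactorial, Nat.descFactorial_eq_factorial_mul_choose,
    Nat.cast_mul, mul_div_assoc, mul_div_cancel_left₀ _ factorial_ne_zero]

lemma ccoef_div_factorial (a : ℕ → ℂ) {p m : ℕ} (hm : m ≤ p) (n : ℂ) :
    ccoef a p m n / ((p - m).factorial : ℂ) =
      signedNewtonCoeff (fun x ↦ ∏ i ∈ range p, (x + a i)) (p - m) (n + m) /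
        ∏ i ∈ range p, (n + m + a i) := by
  have upper_param : (m : ℂ) - p = -((p - m : ℕ) : ℂ) := by rw [Nat.cast_sub hm, neg_sub]
  rw [signedNewtonCoeff, div_right_comm, neg_one_pow_mul_fwdDiff_iter, sum_div, ccoef]
  congr 1
  refine sum_congr rfl fun k _ ↦ ?_
  rw [upper_param, poch_neg_natCast_div_factorial, prod_div_distrib, mul_div_assoc]
  simp only [add_right_comm]

/-- Lemma 2.2: explicit expansion of `Q_p` in powers of the shift:
`(Q_p u)_n = Σ_{m=0}^{p} (c_m(n)/(p−m)!) (Π_{i=1}^{p}(n+a_i+m) / Π_{i=1}^{m}(n+i)) u_{n+m}`. -/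
theorem Qp_expansion (p : ℕ) (a : ℕ → ℂ) (u : ℕ → ℂ) (n : ℕ)
    (hden : ∀ m ≤ p, ∀ i < p, (n : ℂ) + m + a i ≠ 0) :
    Qop a p u n =
      ∑ m ∈ range (p + 1),
        ccoef a p m (n : ℂ) / (Nat.factorial (p - m) : ℂ) *
          ((∏ i ∈ range p, ((n : ℂ) + a i + m)) / (∏ i ∈ range m, ((n : ℂ) + (i + 1 : ℂ)))) *
          u (n + m) := by
  rw [Qop_eq_newtonOperator, newtonOperator, Nat.sum_antidiagonal_eq_sum_range_succ_mk]
  refine sum_congr rfl fun m hm ↦ ?_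
  have hmp : m ≤ p := mem_range_succ_iff.mp hm
  have prod_ne_zero : ∏ i ∈ range p, ((n : ℂ) + m + a i) ≠ 0 :=
    prod_ne_zero_iff.mpr fun i hi ↦ hden m hmp i (mem_range.mp hi)
  rw [normalizedShift_iterate_apply, ccoef_div_factorial a hmp]
  simp only [add_right_comm _ (a _)]
  field_simp
end
end

section
/- (Key identity, Eq. (3.4) of the proof of the main theorem.) Let ε∈{0,1}, ε₁,ε₂∈{−1,1} (with ε₁ = 1 whenever ε = 0), m a positive integer, and λ, μ ∈ ℂ. Then for every n ∈ ℕ, k ∈ ℕ, c ∈ ℂ and integer i ≥ 1 such that the quantities n+εμ, n+λ+ε₂mk, n+λ−ε₂mc, n+i−1+λ+ε₂mk and n+i−1+λ−ε₂mc are all nonzero, one has a(n,k)/α(n,k) − a(n,−c)·α(n+i−1,−c)/(α(n,−c)·α(n+i−1,k)) = (k+c)·B_i(n,c). -/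
noncomputable section

/-- `a(n,k) = ((n+λ)/(n+εμ)) ((n+ε(μ+ε₁mk))/(n+λ+ε₂mk))`. -/
def afun (e e1 e2 : ℂ) (m : ℕ) (lam mu : ℂ) (n k : ℂ) : ℂ :=
  ((n + lam) / (n + e * mu)) * ((n + e * (mu + e1 * m * k)) / (n + lam + e2 * m * k))

/-- `α(n,k) = 1/(n+λ+ε₂mk)`. -/
def alphafun (e2 : ℂ) (m : ℕ) (lam : ℂ) (n k : ℂ) : ℂ :=
  1 / (n + lam + e2 * m * k)

/-- `C_i(n) = ((n+λ)/(n+εμ)) (n+εμ−εε₁ε₂(λ+n+i))`. -/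
def Cfun (e e1 e2 : ℂ) (lam mu : ℂ) (i n : ℂ) : ℂ :=
  ((n + lam) / (n + e * mu)) * (n + e * mu - e * e1 * e2 * (lam + n + i))

/-- `B_i(n,c) = −m ε₂ α(n+i−1,−c) C_{i−1}(n)`. -/
def Bfun (e e1 e2 : ℂ) (m : ℕ) (lam mu : ℂ) (i n c : ℂ) : ℂ :=
  -(m : ℂ) * e2 * alphafun e2 m lam (n + i - 1) (-c) * Cfun e e1 e2 lam mu (i - 1) n

/-!
Dividing by `α` turns `a(n,k)` into an affine function of `k`, and
`α(n+i−1,−c) / α(n+i−1,k)` is affine in `k` as well. Both sides of the identity are therefore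
affine in `k` and vanish at `k = −c`, so only the slopes have to be compared. The two contributions
to the slope combine into `C` because `ε₂² = 1` makes the terms in `c` cancel.
-/

section

variable {e e1 e2 lam n k l : ℂ} {m : ℕ}

theorem afun_div_alphafun (mu : ℂ) (hk : n + lam + e2 * m * k ≠ 0) :
    afun e e1 e2 m lam mu n k / alphafun e2 m lam n k =
      (n + lam) / (n + e * mu) * (n + e * (mu + e1 * m * k)) := by
  rw [afun, alphafun, div_div_eq_mul_div, div_one, mul_assoc, div_mul_cancel₀ _ hk]

theorem afun_div_alphafun_eq_add (mu : ℂ) (hk : n + lam + e2 * m * k ≠ 0)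
    (hl : n + lam + e2 * m * l ≠ 0) :
    afun e e1 e2 m lam mu n k / alphafun e2 m lam n k =
      afun e e1 e2 m lam mu n l / alphafun e2 m lam n l +
        (n + lam) / (n + e * mu) * (e * e1 * m * (k - l)) := by
  rw [afun_div_alphafun mu hk, afun_div_alphafun mu hl]
  ring

theorem alphafun_div_alphafun (k : ℂ) (hl : n + lam + e2 * m * l ≠ 0) :
    alphafun e2 m lam n l / alphafun e2 m lam n k =
      1 + e2 * m * (k - l) * alphafun e2 m lam n l := by
  rw [alphafun, alphafun, div_div_eq_mul_div, div_one]
  linear_combination mul_one_div_cancel hl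

theorem Cfun_eq_afun_div_alphafun_sub (mu j : ℂ) (he2 : e2 ^ 2 = 1)
    (hl : n + lam + e2 * m * l ≠ 0) :
    Cfun e e1 e2 lam mu j n =
      afun e e1 e2 m lam mu n l / alphafun e2 m lam n l -
        (n + lam) / (n + e * mu) * (e * e1 * e2) / alphafun e2 m lam (n + j) l := by
  rw [afun_div_alphafun mu hl, Cfun, alphafun, div_div_eq_mul_div, div_one]
  linear_combination (n + lam) / (n + e * mu) * (e * e1 * m * l) * he2

end

theorem key_identity_general (e e1 e2 : ℂ) (he2 : e2 ^ 2 = 1) (m : ℕ) (lam mu n k c i : ℂ)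
    (_h1 : n + e * mu ≠ 0)
    (h2 : n + lam + e2 * m * k ≠ 0)
    (h3 : n + lam - e2 * m * c ≠ 0)
    (_h4 : n + i - 1 + lam + e2 * m * k ≠ 0)
    (h5 : n + i - 1 + lam - e2 * m * c ≠ 0) :
    afun e e1 e2 m lam mu n k / alphafun e2 m lam n k -
      afun e e1 e2 m lam mu n (-c) * alphafun e2 m lam (n + i - 1) (-c) /
        (alphafun e2 m lam n (-c) * alphafun e2 m lam (n + i - 1) k) =
      (k + c) * Bfun e e1 e2 m lam mu i n c := by
  rw [sub_eq_add_neg, ← mul_neg] at h3 h5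
  set P := (n + lam) / (n + e * mu)
  set A := afun e e1 e2 m lam mu n (-c) / alphafun e2 m lam n (-c)
  set β := alphafun e2 m lam (n + i - 1) (-c)
  have hβ_ne : β ≠ 0 := one_div_ne_zero h5
  have hC : Cfun e e1 e2 lam mu (i - 1) n = A - P * (e * e1 * e2) / β := by
    rw [Cfun_eq_afun_div_alphafun_sub mu (i - 1) he2 h3, ← add_sub_assoc]
  calc
    _ = A + P * (e * e1 * m * (k - -c)) - A * (1 + e2 * m * (k - -c) * β) := by
      rw [mul_div_mul_comm, alphafun_div_alphafun k h5, afun_div_alphafun_eq_add mu h2 h3]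
    _ = (k + c) * (m * (P * (e * e1) - e2 * β * A)) := by ring
    _ = (k + c) * (-m * e2 * β * (A - P * (e * e1 * e2) / β)) := by
      congr 1
      field_simp
      linear_combination -m * P * e * e1 * he2
    _ = (k + c) * Bfun e e1 e2 m lam mu i n c := by rw [Bfun, hC]

/-- Key identity (Eq. (3.4) of the proof of the main theorem):
`a(n,k)/α(n,k) − a(n,−c) α(n+i−1,−c)/(α(n,−c) α(n+i−1,k)) = (k+c) B_i(n,c)`. -/
theorem key_identity (e e1 e2 : ℂ) (he : e = 0 ∨ e = 1)
    (he1 : e1 = -1 ∨ e1 = 1) (he2 : e2 = -1 ∨ e2 = 1)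
    (hee1 : e = 0 → e1 = 1)
    (m : ℕ) (hm : 1 ≤ m) (lam mu : ℂ)
    (n k : ℕ) (c : ℂ) (i : ℕ) (hi : 1 ≤ i)
    (h1 : (n : ℂ) + e * mu ≠ 0)
    (h2 : (n : ℂ) + lam + e2 * m * k ≠ 0)
    (h3 : (n : ℂ) + lam - e2 * m * c ≠ 0)
    (h4 : (n : ℂ) + i - 1 + lam + e2 * m * k ≠ 0)
    (h5 : (n : ℂ) + i - 1 + lam - e2 * m * c ≠ 0) :
    afun e e1 e2 m lam mu n k / alphafun e2 m lam n k -
      afun e e1 e2 m lam mu n (-c) * alphafun e2 m lam ((n : ℂ) + i - 1) (-c) /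
        (alphafun e2 m lam n (-c) * alphafun e2 m lam ((n : ℂ) + i - 1) k) =
      ((k : ℂ) + c) * Bfun e e1 e2 m lam mu i n c := by
  exact key_identity_general e e1 e2 (sq_eq_one_iff.mpr he2.symm) m lam mu n k c i h1 h2 h3 h4 h5
end
end

section
/- (Eq. (3.8), first line, of the proof of the main theorem.) Let ε∈{0,1}, ε₁,ε₂∈{−1,1} (with ε₁ = 1 whenever ε = 0), m a positive integer, and λ, μ ∈ ℂ. Let U : ℕ × ℕ → ℂ satisfy U(n+1,k) = a(n,k)·U(n,k) for all n, k ∈ ℕ, and set φ_i(n,k) = Π_{j=0}^{i−1} α(n+j,k) (with φ_0 = 1). Then for every c ∈ ℂ, every integer i ≥ 1, and every n, k ∈ ℕ such that B_i(n,c) ≠ 0 and all the quantities n+εμ, n+j+λ+ε₂mk (0 ≤ j ≤ i−1), n+λ−ε₂mc and n+i−1+λ−ε₂mc are nonzero, one has (1/B_i(n,c))·( φ_{i−1}(n+1,k)·U(n+1,k) − (a(n,−c)·α(n+i−1,−c)/α(n,−c))·φ_{i−1}(n,k)·U(n,k) ) = (k+c)·φ_i(n,k)·U(n,k); that is, the operator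 ℱ_{c,i} maps the sequence n ↦ φ_{i−1}(n,k)·U(n,k) to the sequence n ↦ (k+c)·φ_i(n,k)·U(n,k). -/
noncomputable section

open Finset

/-- `φ_i(n,k) = Π_{j=0}^{i−1} α(n+j,k)`, with `φ_0 = 1`. -/
def phifun (e2 : ℂ) (m : ℕ) (lam : ℂ) (i : ℕ) (n k : ℂ) : ℂ :=
  ∏ j ∈ range i, alphafun e2 m lam (n + j) k

/-!
Write `α(n,k) = 1 / Y(n,k)` and `a(n,k) = N(n,k) α(n,k)`, where for fixed `n` both
`Y(n,k) = n + λ + ε₂mk` and `N(n,k)` are affine in `k`. Since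
`φ_{i+1}(n,k) = φ_i(n+1,k) α(n,k) = φ_i(n,k) α(n+i,k)`, applying `ℱ_{c,i+1}` to `φ_i U` gives
`φ_{i+1}(n,k) U(n,k)` times
`(N(n,k) - N(n,-c) α(n+i,-c) / α(n+i,k)) / B_{i+1}(n,c)`.
Over the common denominator `Y(n+i,-c)` the numerator of the parenthesis is
`N(n,k) Y(n+i,-c) - N(n,-c) Y(n+i,k)`, a `2 × 2` determinant of affine functions evaluated at `k`
and `-c`, hence a multiple of `k + c`. The factor is `-mε₂ C_i(n)`, so the parenthesis is
`(k + c) B_{i+1}(n,c)`.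
-/

section

variable (e e1 e2 : ℂ) (m : ℕ) (lam mu : ℂ)

/-- `N(n,k) = ((n+λ)/(n+εμ)) (n+ε(μ+ε₁mk))`, the coefficient `a(n,k)` cleared of its only
denominator involving `k`. -/
def afunNum (n k : ℂ) : ℂ :=
  ((n + lam) / (n + e * mu)) * (n + e * (mu + e1 * m * k))

/-- The operator `ℱ_{c,i}` on sequences `G`. The index `i` is complex, as it is in `Bfun`. -/
def Fci (c i : ℂ) (G : ℕ → ℂ) (n : ℕ) : ℂ :=
  (1 / Bfun e e1 e2 m lam mu i n c) *
    (G (n + 1) -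
      (afun e e1 e2 m lam mu n (-c) * alphafun e2 m lam (n + i - 1) (-c) /
          alphafun e2 m lam n (-c)) * G n)

lemma alphafun_ne_zero_iff {n k : ℂ} :
    alphafun e2 m lam n k ≠ 0 ↔ n + lam + e2 * m * k ≠ 0 := by
  simp [alphafun]

lemma afun_eq_afunNum_mul_alphafun (n k : ℂ) :
    afun e e1 e2 m lam mu n k = afunNum e e1 m lam mu n k * alphafun e2 m lam n k := by
  simp only [afun, afunNum, alphafun]
  ring

lemma Bfun_add_one (i n c : ℂ) :
    Bfun e e1 e2 m lam mu (i + 1) n c =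
      -(m : ℂ) * e2 * alphafun e2 m lam (n + i) (-c) * Cfun e e1 e2 lam mu i n := by
  simp only [Bfun, ← add_assoc, add_sub_cancel_right]

lemma phifun_succ (i : ℕ) (n k : ℂ) :
    phifun e2 m lam (i + 1) n k = phifun e2 m lam i n k * alphafun e2 m lam (n + i) k :=
  prod_range_succ _ _

lemma phifun_succ' (i : ℕ) (n k : ℂ) :
    phifun e2 m lam (i + 1) n k = phifun e2 m lam i (n + 1) k * alphafun e2 m lam n k := by
  simp only [phifun, prod_range_succ', Nat.cast_add_one, Nat.cast_zero, add_zero, add_assoc,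
    add_comm (1 : ℂ)]

variable {e2}

lemma afunNum_mul_sub_afunNum_mul (he2 : e2 ^ 2 = 1) (i n k l : ℂ) :
    afunNum e e1 m lam mu n k * (n + i + lam + e2 * m * l) -
        afunNum e e1 m lam mu n l * (n + i + lam + e2 * m * k) =
      -(m : ℂ) * e2 * Cfun e e1 e2 lam mu i n * (k - l) := by
  simp only [afunNum, Cfun]
  generalize (n + lam) / (n + e * mu) = r
  linear_combination (-(r * m * e * e1 * (lam + n + i) * (k - l))) * he2

lemma afunNum_sub_afunNum_mul_alphafun_div (he2 : e2 ^ 2 = 1) {i n k l : ℂ}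
    (hk : alphafun e2 m lam (n + i) k ≠ 0) (hl : alphafun e2 m lam (n + i) l ≠ 0) :
    afunNum e e1 m lam mu n k -
        afunNum e e1 m lam mu n l * alphafun e2 m lam (n + i) l / alphafun e2 m lam (n + i) k =
      -(m : ℂ) * e2 * alphafun e2 m lam (n + i) l * Cfun e e1 e2 lam mu i n * (k - l) := by
  have cross := afunNum_mul_sub_afunNum_mul e e1 m lam mu he2 i n k l
  rw [alphafun_ne_zero_iff] at hk hl
  simp only [alphafun]
  field_simp
  linear_combination cross

theorem Fci_action_general (he2 : e2 ^ 2 = 1) (k : ℂ) (U : ℕ → ℂ)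
    (hU : ∀ n : ℕ, U (n + 1) = afun e e1 e2 m lam mu n k * U n) (c : ℂ) (i n : ℕ)
    (hB : Bfun e e1 e2 m lam mu (i + 1) n c ≠ 0)
    (hk : ∀ j : ℕ, j ≤ i → (n : ℂ) + j + lam + e2 * m * k ≠ 0)
    (hc : (n : ℂ) + lam - e2 * m * c ≠ 0) :
    Fci e e1 e2 m lam mu c (i + 1) (fun n ↦ phifun e2 m lam i n k * U n) n =
      (k + c) * phifun e2 m lam (i + 1) n k * U n := by
  have hαk : alphafun e2 m lam (n + i) k ≠ 0 := (alphafun_ne_zero_iff ..).2 (hk i le_rfl)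
  have hαc : alphafun e2 m lam n (-c) ≠ 0 :=
    (alphafun_ne_zero_iff ..).2 (by rwa [mul_neg, ← sub_eq_add_neg])
  have hαic : alphafun e2 m lam (n + i) (-c) ≠ 0 := by
    rw [Bfun_add_one] at hB
    exact right_ne_zero_of_mul (left_ne_zero_of_mul hB)
  have shifted_term : phifun e2 m lam i (n + 1) k * U (n + 1) =
      afunNum e e1 m lam mu n k * (phifun e2 m lam (i + 1) n k * U n) := by
    rw [hU, afun_eq_afunNum_mul_alphafun, phifun_succ']
    ring
  have unshifted_term : phifun e2 m lam i n k =
      phifun e2 m lam (i + 1) n k / alphafun e2 m lam (n + i) k := by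
    rw [phifun_succ, mul_div_cancel_right₀ _ hαk]
  have coeff : afun e e1 e2 m lam mu n (-c) * alphafun e2 m lam (n + i) (-c) /
      alphafun e2 m lam n (-c) =
        afunNum e e1 m lam mu n (-c) * alphafun e2 m lam (n + i) (-c) := by
    rw [afun_eq_afunNum_mul_alphafun, mul_right_comm, mul_div_cancel_right₀ _ hαc]
  have bracket := afunNum_sub_afunNum_mul_alphafun_div e e1 m lam mu he2 hαk hαic
  rw [← Bfun_add_one, sub_neg_eq_add] at bracket
  rw [Fci, one_div, inv_mul_eq_iff_eq_mul₀ hB, ← add_assoc, add_sub_cancel_right, coeff,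
    Nat.cast_add_one, shifted_term, unshifted_term]
  linear_combination phifun e2 m lam (i + 1) n k * U n * bracket

end

/-- Eq. (3.8), first line, of the proof of the main theorem: the operator
`ℱ_{c,i}` maps the sequence `n ↦ φ_{i−1}(n,k) U(n,k)` to
`n ↦ (k+c) φ_i(n,k) U(n,k)`. -/
theorem Fci_action (e e1 e2 : ℂ) (he : e = 0 ∨ e = 1)
    (he1 : e1 = -1 ∨ e1 = 1) (he2 : e2 = -1 ∨ e2 = 1)
    (hee1 : e = 0 → e1 = 1)
    (m : ℕ) (hm : 1 ≤ m) (lam mu : ℂ)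
    (U : ℕ → ℕ → ℂ)
    (hU : ∀ n k : ℕ, U (n + 1) k = afun e e1 e2 m lam mu n k * U n k)
    (c : ℂ) (i : ℕ) (hi : 1 ≤ i) (n k : ℕ)
    (hB : Bfun e e1 e2 m lam mu i n c ≠ 0)
    (h1 : (n : ℂ) + e * mu ≠ 0)
    (h2 : ∀ j : ℕ, j ≤ i - 1 → (n : ℂ) + j + lam + e2 * m * k ≠ 0)
    (h3 : (n : ℂ) + lam - e2 * m * c ≠ 0)
    (h4 : (n : ℂ) + i - 1 + lam - e2 * m * c ≠ 0) :
    (1 / Bfun e e1 e2 m lam mu i n c) *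
        (phifun e2 m lam (i - 1) ((n : ℂ) + 1) k * U (n + 1) k -
          (afun e e1 e2 m lam mu n (-c) * alphafun e2 m lam ((n : ℂ) + i - 1) (-c) /
              alphafun e2 m lam n (-c)) *
            phifun e2 m lam (i - 1) n k * U n k) =
      ((k : ℂ) + c) * phifun e2 m lam i n k * U n k := by
  obtain ⟨i, rfl⟩ := Nat.exists_eq_add_of_le' hi
  simpa [Fci, mul_assoc] using
    Fci_action_general e e1 m lam mu (sq_eq_one_iff.2 he2.symm) k (U · k) (hU · k) c i n
      (by simpa using hB) h2 h3
end
end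

section
/- (Proposition 6.1.) Let (φ_n)_{n∈ℕ} be a sequence of formal power series in ℂ[[x]]. Assume: (X) there exist integers m, ℓ ≥ 0 and polynomials A_0,…,A_m, B_0,…,B_ℓ ∈ ℂ[n], with A_0,…,A_m not all zero, such that Σ_{i=0}^{m} A_i(n)·x·φ_{n+i} = Σ_{j=0}^{ℓ} B_j(n)·φ_{n+j} for all n ∈ ℕ; and (M) there exist a nonzero polynomial π ∈ ℂ[x], integers s, t ≥ 0 and polynomials E_{−s},…,E_t ∈ ℂ[n] such that π(x)·φ_n' = Σ_{j=−s}^{t} E_j(n)·φ_{n+j} for all n ≥ s, where ' denotes the formal derivative with respect to x. Then (D): there exist integers r, u ≥ 0 and polynomials C_0,…,C_r, D_0,…,D_u ∈ ℂ[n], with C_0,…,C_r not all zero, such that for all sufficiently large n, ( Σ_{i=0}^{r} C_i(n)·φ_{n+i} )' = Σ_{j=0}^{u} D_j(n)·φ_{n+j}. -/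
noncomputable section

open Finset PowerSeries Polynomial

/-!
Sequences of power series form a module over the Ore algebra `R` of operators `∑ Aᵢ(n) Sⁱ`, where
`S` is the shift `n ↦ n + 1`. As `R` is a left Ore domain, `T = {f | P f ∈ R φ for some P ≠ 0}` is
a submodule, and (D) says that `φ' ∈ T`. Multiplication by `x` commutes with `R`, so by (X), which
reads `x φ ∈ T`, it maps `T` into itself, and `π φ ∈ T`. A shift of (M) reads `π φ' ∈ T`. Finally
`π` can be cancelled: if `π φ` is torsion so is `φ`, hence also `π φ'` and `φ'`; otherwise `p π φ =
q φ` with `p, q ≠ 0`, so `r π φ' = s φ` and `u s = v q` give `u r π φ' = v q φ = v p π φ`, that is,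
`u r φ' = v p φ`.
-/

open scoped nonZeroDivisors Pointwise

section SkewMonoidAlgebra

variable {k G : Type*}

theorem skewMonoidAlgebra_coeff_mul_of_uniqueMul [Semiring k] [Mul G] [SMulZeroClass G k]
    {f g : SkewMonoidAlgebra k G} {a b : G} (h : UniqueMul f.support g.support a b) :
    (f * g).coeff (a * b) = f.coeff a * a • g.coeff b := by
  classical
  simp_rw [SkewMonoidAlgebra.coeff_mul, SkewMonoidAlgebra.sum_def', ← Finset.sum_product']
  refine (Finset.sum_eq_single (a, b) ?_ ?_).trans (if_pos rfl)
  · rintro ⟨c, d⟩ hcd hne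
    rw [mem_product] at hcd
    exact if_neg fun heq => hne (Prod.ext_iff.2 (h hcd.1 hcd.2 heq))
  · intro hab
    rw [mem_product, not_and_or, SkewMonoidAlgebra.notMem_support_iff,
      SkewMonoidAlgebra.notMem_support_iff] at hab
    rcases hab with ha | hb
    · simp [ha]
    · simp [hb]

theorem skewMonoidAlgebra_noZeroDivisors [Semiring k] [NoZeroDivisors k] [Mul G] [UniqueProds G]
    [SMulZeroClass G k] (smul_eq_zero_imp : ∀ (g : G) (a : k), g • a = 0 → a = 0) :
    NoZeroDivisors (SkewMonoidAlgebra k G) where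
  eq_zero_or_eq_zero_of_mul_eq_zero {f g} hfg := by
    contrapose! hfg
    simp only [ne_eq, ← SkewMonoidAlgebra.support_eq_empty, ← nonempty_iff_ne_empty] at hfg
    obtain ⟨a, ha, b, hb, hab⟩ := UniqueProds.uniqueMul_of_nonempty hfg.1 hfg.2
    rw [SkewMonoidAlgebra.mem_support_iff] at ha hb
    have coeff_ne_zero : (f * g).coeff (a * b) ≠ 0 := by
      rw [skewMonoidAlgebra_coeff_mul_of_uniqueMul hab]
      exact mul_ne_zero ha (mt (smul_eq_zero_imp a _) hb)
    intro hzero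
    simp [hzero] at coeff_ne_zero

variable [Ring k] [Monoid G] [MulSemiringAction G k]

theorem skewMonoidAlgebra_linearIndependent_of_mul [NoZeroDivisors (SkewMonoidAlgebra k G)]
    {r : SkewMonoidAlgebra k G} (hr : r ≠ 0) :
    LinearIndependent k fun g : G => SkewMonoidAlgebra.of k G g * r := by
  have independent_of : LinearIndependent k (SkewMonoidAlgebra.of k G) := by
    convert! SkewMonoidAlgebra.basisSingleOne.linearIndependent
  have injective : Function.Injective (LinearMap.mulRight k r) := mul_left_injective₀ hr
  exact independent_of.map_injOn (LinearMap.mulRight k r) injective.injOn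

theorem skewMonoidAlgebra_of_mul_mem_span [DecidableEq G] {F A : Finset G}
    {r : SkewMonoidAlgebra k G} (hr : r.support ⊆ A) {g : G} (hg : g ∈ F) :
    SkewMonoidAlgebra.of k G g * r ∈
      Submodule.span k (SkewMonoidAlgebra.of k G '' (F * A : Finset G)) := by
  have support_subset : (SkewMonoidAlgebra.of k G g * r).support ⊆ F * A :=
    (SkewMonoidAlgebra.support_mul _ _).trans <| mul_subset_mul
      (SkewMonoidAlgebra.support_single_subset.trans (singleton_subset_iff.2 hg)) hr
  exact Submodule.span_mono (Set.image_mono (coe_subset.2 support_subset))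
    (SkewMonoidAlgebra.mem_span_support _)

/- Without a common multiple the translates `g * r` and `g * s`, for `g ∈ F`, would be `2 * #F`
independent elements of a module spanned by `#(F * (r.support ∪ s.support))` elements. -/
theorem skewMonoidAlgebra_exists_mul_eq_mul_of_card_lt [StrongRankCondition k]
    [DecidableEq G] [NoZeroDivisors (SkewMonoidAlgebra k G)] {r s : SkewMonoidAlgebra k G}
    (hs : s ≠ 0) {F : Finset G} (hF : #(F * (r.support ∪ s.support)) < 2 * #F) :
    ∃ u v : SkewMonoidAlgebra k G, u ≠ 0 ∧ u * r = v * s := by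
  classical
  have := nontrivial_of_invariantBasisNumber k
  by_contra! h
  have hr : r ≠ 0 := fun hr => h 1 0 one_ne_zero (by rw [hr, mul_zero, zero_mul])
  let translates (q : SkewMonoidAlgebra k G) (g : F) := SkewMonoidAlgebra.of k G (g : G) * q
  have span_le (q : SkewMonoidAlgebra k G) :
      Submodule.span k (Set.range (translates q)) ≤ (LinearMap.mulRight k q).range :=
    Submodule.span_le.2 (Set.range_subset_iff.2 fun g => ⟨_, rfl⟩)
  have disjoint : Disjoint (Submodule.span k (Set.range (translates r)))
      (Submodule.span k (Set.range (translates s))) := by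
    rw [Submodule.disjoint_def]
    intro x hxr hxs
    obtain ⟨u, rfl⟩ := span_le r hxr
    obtain ⟨v, hv⟩ := span_le s hxs
    by_contra hur
    exact h u v (left_ne_zero_of_mul hur) hv.symm
  have independent {q : SkewMonoidAlgebra k G} (hq : q ≠ 0) :
      LinearIndependent k (translates q) :=
    (skewMonoidAlgebra_linearIndependent_of_mul hq).comp _ Subtype.val_injective
  have mem_span : Set.range (Sum.elim (translates r) (translates s)) ≤
      Submodule.span k (SkewMonoidAlgebra.of k G '' (F * (r.support ∪ s.support) : Finset G)) := by
    rintro _ ⟨g | g, rfl⟩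
    · exact skewMonoidAlgebra_of_mul_mem_span subset_union_left g.2
    · exact skewMonoidAlgebra_of_mul_mem_span subset_union_right g.2
  rw [← coe_image] at mem_span
  have card_le := linearIndependent_le_span_aux' _
    ((independent hr).sum_type (independent hs) disjoint) _ mem_span
  rw [Fintype.card_sum, Fintype.card_coe, ← two_mul] at card_le
  exact hF.not_ge (card_le.trans ((Fintype.card_coe _).trans_le card_image_le))

end SkewMonoidAlgebra

section OreSaturation

variable {R M : Type*} [Ring R] [AddCommGroup M] [Module R M]

/-- The preimage in `M` of the localized submodule `S⁻¹N` of `S⁻¹M`: the elements that some `s ∈ S`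
carries into `N`. Here it expresses that a sequence satisfies a recurrence relative to another. -/
def oreSaturation (S : Submonoid R) [OreLocalization.OreSet S] (N : Submodule R M) :
    Submodule R M where
  carrier := {x | ∃ s ∈ S, s • x ∈ N}
  zero_mem' := ⟨1, S.one_mem, by simp⟩
  add_mem' := by
    rintro x y ⟨s, hs, hx⟩ ⟨t, ht, hy⟩
    have common_multiple := OreLocalization.ore_eq s ⟨t, ht⟩
    refine ⟨OreLocalization.oreDenom s ⟨t, ht⟩ * s, S.mul_mem (SetLike.coe_mem _) hs, ?_⟩
    rw [smul_add]
    nth_rw 2 [common_multiple]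
    simp only [mul_smul]
    exact N.add_mem (N.smul_mem _ hx) (N.smul_mem _ hy)
  smul_mem' := by
    rintro a x ⟨s, hs, hx⟩
    refine ⟨OreLocalization.oreDenom a ⟨s, hs⟩, SetLike.coe_mem _, ?_⟩
    rw [← mul_smul, OreLocalization.ore_eq, mul_smul]
    exact N.smul_mem _ hx

namespace oreSaturation

variable {S : Submonoid R} [OreLocalization.OreSet S] {N : Submodule R M}

theorem le : N ≤ oreSaturation S N := fun x hx => ⟨1, S.one_mem, by rwa [one_smul]⟩

theorem mem_of_smul_mem {s : R} (hs : s ∈ S) {x : M} (hx : s • x ∈ oreSaturation S N) :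
    x ∈ oreSaturation S N := by
  obtain ⟨t, ht, htx⟩ := hx
  exact ⟨t * s, S.mul_mem ht hs, by rwa [mul_smul]⟩

theorem map_mem_of_map_mem {φ x : M} {θ : M →ₗ[R] M}
    (hφ : θ φ ∈ oreSaturation S (R ∙ φ)) (hx : x ∈ oreSaturation S (R ∙ φ)) :
    θ x ∈ oreSaturation S (R ∙ φ) := by
  obtain ⟨s, hs, hsx⟩ := hx
  obtain ⟨q, hq⟩ := Submodule.mem_span_singleton.1 hsx
  refine mem_of_smul_mem hs ?_
  rw [← map_smul, ← hq, map_smul]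
  exact Submodule.smul_mem _ q hφ

theorem mem_of_map_mem [IsDomain R] [OreLocalization.OreSet R⁰] {φ x : M}
    {θ : M →ₗ[R] M} (hθ : Function.Injective θ) (hφ : θ φ ∈ oreSaturation R⁰ (R ∙ φ))
    (hx : θ x ∈ oreSaturation R⁰ (R ∙ φ)) : x ∈ oreSaturation R⁰ (R ∙ φ) := by
  obtain ⟨p, hp, hpφ⟩ := hφ
  obtain ⟨r, hr, hrx⟩ := hx
  obtain ⟨q, hq⟩ := Submodule.mem_span_singleton.1 hpφ
  obtain ⟨s, hs⟩ := Submodule.mem_span_singleton.1 hrx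
  by_cases hq0 : q = 0
  · have torsion : p • φ = 0 := hθ (by rw [map_smul, ← hq, hq0, zero_smul, map_zero])
    let p' : R⁰ := ⟨p, hp⟩
    have annihilates : (OreLocalization.oreDenom s p' * r) • x = 0 := by
      apply hθ
      rw [map_smul, mul_smul, ← hs, ← mul_smul, OreLocalization.ore_eq, mul_smul, torsion,
        smul_zero, map_zero]
    exact ⟨_, mul_mem (SetLike.coe_mem _) hr, annihilates ▸ zero_mem _⟩
  · let q' : R⁰ := ⟨q, mem_nonZeroDivisors_of_ne_zero hq0⟩
    refine ⟨OreLocalization.oreDenom s q' * r, mul_mem (SetLike.coe_mem _) hr, ?_⟩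
    refine Submodule.mem_span_singleton.2 ⟨OreLocalization.oreNum s q' * p, hθ ?_⟩
    simp only [map_smul, mul_smul, ← hq, ← hs]
    rw [← mul_smul, ← mul_smul, OreLocalization.ore_eq]

end oreSaturation

end OreSaturation

theorem exists_card_add_lt_two_mul_card (A : Finset ℕ) : ∃ F : Finset ℕ, #(F + A) < 2 * #F := by
  let d := A.sup id
  have add_subset : range (d + 1) + A ⊆ range (2 * d + 1) := by
    intro n hn
    obtain ⟨i, hi, j, hj, rfl⟩ := mem_add.1 hn
    have hjd : j ≤ d := le_sup (f := id) hj
    rw [mem_range] at hi ⊢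
    lia
  have card_le := card_le_card add_subset
  refine ⟨range (d + 1), ?_⟩
  rw [card_range] at card_le ⊢
  lia

/-- The Ore algebra of linear recurrence operators `∑ Aᵢ(n) Sⁱ` with polynomial coefficients in the
index `n`. The commutation rule `S A(n) = A(n + 1) S` comes from `ShiftOperator.taylorAction`. -/
abbrev ShiftOperator (K : Type*) [CommRing K] := SkewPolynomial K[X]

namespace ShiftOperator

variable {K V W : Type*} [CommRing K] [AddCommGroup V] [Module K V] [AddCommGroup W] [Module K W]

/-- The action of `ℕ` on polynomials in the index by translation, `i • A(n) = A(n + i)`, which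
twists the multiplication of `ShiftOperator K`. -/
scoped instance taylorAction : MulSemiringAction (Multiplicative ℕ) K[X] where
  smul i p := taylor (i.toAdd : K) p
  one_smul p := (congrArg (taylor · p) Nat.cast_zero).trans (taylor_zero p)
  mul_smul i j p := by
    change taylor _ p = taylor _ (taylor _ p)
    rw [taylor_taylor, toAdd_mul, Nat.cast_add]
  smul_zero _ := map_zero _
  smul_add _ := map_add _
  smul_one _ := taylor_one _
  smul_mul _ := taylor_mul _

instance [IsDomain K] : IsDomain (ShiftOperator K) :=
  have : NoZeroDivisors (ShiftOperator K) :=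
    skewMonoidAlgebra_noZeroDivisors fun i _ => (taylor_eq_zero (i.toAdd : K) _).1
  NoZeroDivisors.to_isDomain _

theorem exists_mul_eq_mul [IsDomain K] (r : ShiftOperator K) {s : ShiftOperator K}
    (hs : s ≠ 0) : ∃ u v : ShiftOperator K, u ≠ 0 ∧ u * r = v * s :=
  have ⟨_, hF⟩ := exists_card_add_lt_two_mul_card
    (SkewMonoidAlgebra.support r ∪ SkewMonoidAlgebra.support s : Finset (Multiplicative ℕ))
  skewMonoidAlgebra_exists_mul_eq_mul_of_card_lt hs hF

instance [IsDomain K] : OreLocalization.OreSet (ShiftOperator K)⁰ := by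
  refine Classical.choice (OreLocalization.nonempty_oreSet_iff_of_noZeroDivisors.2 fun r s => ?_)
  obtain ⟨u, v, hu, huv⟩ := exists_mul_eq_mul r (nonZeroDivisors.coe_ne_zero s)
  exact ⟨v, ⟨u, mem_nonZeroDivisors_of_ne_zero hu⟩, huv⟩

/-- The action of the powers of `S` on sequences, `(Sⁱ f) n = f (n + i)`. -/
def shiftHom (K V : Type*) [CommRing K] [AddCommGroup V] [Module K V] :
    Multiplicative ℕ →* Module.End K (ℕ → V) where
  toFun i := LinearMap.funLeft K V (· + i.toAdd)
  map_one' := rfl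
  map_mul' i j := by
    ext f n
    exact congrArg f (add_assoc n i.toAdd j.toAdd).symm

/-- The representation of the Ore algebra on `V`-valued sequences in which polynomial coefficients
act through their values at the index. -/
def toEnd (K V : Type*) [CommRing K] [AddCommGroup V] [Module K V] :
    ShiftOperator K →+* Module.End K (ℕ → V) :=
  SkewMonoidAlgebra.liftNCRingHom
    ((Module.toModuleEnd K (S := ℕ → K) (ℕ → V)).comp (RingHom.pi fun n => evalRingHom (n : K)))
    (shiftHom K V) (by
      intro a i
      ext f n
      have eval_taylor :
          (taylor (i.toAdd : K) a).eval (n : K) = a.eval ((n + i.toAdd : ℕ) : K) := by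
        rw [taylor_eval, Nat.cast_add]
      exact congrArg (· • f (n + i.toAdd)) eval_taylor)

/-- `V`-valued sequences as a module over the Ore algebra. It is scoped because `ℕ → V` may carry
other scalar actions. -/
scoped instance sequenceModule : Module (ShiftOperator K) (ℕ → V) :=
  Module.compHom (ℕ → V) (toEnd K V)

theorem monomial_smul_apply (i : ℕ) (a : K[X]) (f : ℕ → V) (n : ℕ) :
    (SkewPolynomial.monomial i a • f) n = a.eval (n : K) • f (n + i) :=
  congrFun (DFunLike.congr_fun (SkewMonoidAlgebra.liftNC_single
    (k := K[X]) (G := Multiplicative ℕ) (R := Module.End K (ℕ → V)) _ _ _ _) f) n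

theorem sum_monomial_smul_apply (s : Finset ℕ) (A : ℕ → K[X]) (f : ℕ → V) (n : ℕ) :
    ((∑ i ∈ s, SkewPolynomial.monomial i (A i)) • f) n =
      ∑ i ∈ s, (A i).eval (n : K) • f (n + i) := by
  simp_rw [sum_smul, Finset.sum_apply, monomial_smul_apply]

theorem coeff_sum_monomial (s : Finset ℕ) (A : ℕ → K[X]) {i : ℕ} (hi : i ∈ s) :
    SkewPolynomial.coeff (∑ j ∈ s, SkewPolynomial.monomial j (A j)) i = A i := by
  have h := congrArg (· (Multiplicative.ofAdd i))
    (map_sum SkewMonoidAlgebra.coeffAddEquiv (fun j => SkewPolynomial.monomial j (A j)) s)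
  refine h.trans ?_
  rw [Finsupp.finsetSum_apply]
  refine (sum_eq_single_of_mem i hi fun j _ hj => ?_).trans ?_
  · exact SkewPolynomial.coeff_monomial.trans (if_neg hj)
  · exact SkewPolynomial.coeff_monomial.trans (if_pos rfl)

theorem exists_eq_sum_range_monomial (P : ShiftOperator K) :
    ∃ (r : ℕ) (A : ℕ → K[X]), P = ∑ i ∈ range (r + 1), SkewPolynomial.monomial i (A i) := by
  refine ⟨P.support.sup id, P.coeff, ?_⟩
  conv_lhs => rw [← SkewPolynomial.sum_monomial P, SkewPolynomial.sum_def]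
  refine sum_subset P.support.subset_range_sup_succ fun i _ hi => ?_
  rw [SkewPolynomial.notMem_support_iff.1 hi, map_zero]

/-- Termwise application of a `K`-linear map to sequences, which commutes with all recurrence
operators. -/
def mapSequence (T : V →ₗ[K] W) : (ℕ → V) →ₗ[ShiftOperator K] (ℕ → W) where
  toFun f n := T (f n)
  map_add' f g := funext fun n => map_add T (f n) (g n)
  map_smul' P f := by
    obtain ⟨r, A, rfl⟩ := exists_eq_sum_range_monomial P
    ext n
    simp_rw [RingHom.id_apply, sum_monomial_smul_apply, map_sum, map_smul]

theorem mapSequence_injective {T : V →ₗ[K] W} (hT : Function.Injective T) :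
    Function.Injective (mapSequence T) := hT.comp_left

theorem mapSequence_aeval_mem [IsDomain K] {T : V →ₗ[K] V} {f : ℕ → V}
    (hT : mapSequence T f ∈ oreSaturation (ShiftOperator K)⁰ (ShiftOperator K ∙ f)) (p : K[X]) :
    mapSequence (aeval T p) f ∈ oreSaturation (ShiftOperator K)⁰ (ShiftOperator K ∙ f) := by
  induction p using Polynomial.induction_on with
  | C a =>
    have scalar : mapSequence (aeval T (C a)) f =
        (SkewPolynomial.monomial 0 (C a) : ShiftOperator K) • f := by
      ext n
      rw [monomial_smul_apply, aeval_C, eval_C]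
      rfl
    rw [scalar]
    exact oreSaturation.le (Submodule.smul_mem _ _ (Submodule.mem_span_singleton_self f))
  | add p q hp hq =>
    rw [map_add]
    exact add_mem hp hq
  | monomial n a h =>
    rw [pow_succ', mul_left_comm, map_mul, aeval_X]
    exact oreSaturation.map_mem_of_map_mem (θ := mapSequence T) hT h

theorem mem_oreSaturation_span_singleton_iff [IsDomain K] {f g : ℕ → V} :
    g ∈ oreSaturation (ShiftOperator K)⁰ (ShiftOperator K ∙ f) ↔
      ∃ (r u : ℕ) (C D : ℕ → K[X]), (¬ ∀ i ≤ r, C i = 0) ∧ ∀ n : ℕ,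
        ∑ i ∈ range (r + 1), (C i).eval (n : K) • g (n + i) =
          ∑ j ∈ range (u + 1), (D j).eval (n : K) • f (n + j) := by
  constructor
  · rintro ⟨P, hP, hPg⟩
    obtain ⟨Q, hQ⟩ := Submodule.mem_span_singleton.1 hPg
    obtain ⟨r, C, rfl⟩ := exists_eq_sum_range_monomial P
    obtain ⟨u, D, rfl⟩ := exists_eq_sum_range_monomial Q
    refine ⟨r, u, C, D, fun hC => nonZeroDivisors.ne_zero hP (sum_eq_zero fun i hi => ?_),
      fun n => ?_⟩
    · rw [hC i (mem_range_succ_iff.1 hi), map_zero]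
    · rw [← sum_monomial_smul_apply, ← sum_monomial_smul_apply, hQ]
  · rintro ⟨r, u, C, D, hC, hCD⟩
    push Not at hC
    obtain ⟨i, hi, hCi⟩ := hC
    have ne_zero : ∑ j ∈ range (r + 1), SkewPolynomial.monomial j (C j) ≠ 0 := fun hzero =>
      hCi (by rw [← coeff_sum_monomial _ C (mem_range_succ_iff.2 hi), hzero,
        SkewPolynomial.coeff_zero])
    refine ⟨_, mem_nonZeroDivisors_of_ne_zero ne_zero, Submodule.mem_span_singleton.2
      ⟨∑ j ∈ range (u + 1), SkewPolynomial.monomial j (D j), funext fun n => ?_⟩⟩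
    rw [sum_monomial_smul_apply, sum_monomial_smul_apply, hCD]

theorem mem_oreSaturation_of_eq_sum_Icc [IsDomain K] {f g : ℕ → V} {s t : ℕ} {E : ℤ → K[X]}
    (h : ∀ n : ℕ, s ≤ n → g n = ∑ j ∈ Icc (-(s : ℤ)) (t : ℤ),
      (E j).eval (n : K) • f ((n : ℤ) + j).toNat) :
    g ∈ oreSaturation (ShiftOperator K)⁰ (ShiftOperator K ∙ f) := by
  refine mem_oreSaturation_span_singleton_iff.2 ⟨s, s + t, Pi.single s 1,
    fun i => taylor (s : K) (E (i - s)), fun hzero => ?_, fun n => ?_⟩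
  · simpa using hzero s le_rfl
  · have shifted : ∑ i ∈ range (s + 1), ((Pi.single s 1 : ℕ → K[X]) i).eval (n : K) • g (n + i) =
        g (n + s) := by
      rw [sum_eq_single_of_mem s (self_mem_range_succ s), Pi.single_eq_same, eval_one, one_smul]
      intro i _ hi
      rw [Pi.single_eq_of_ne hi, eval_zero, zero_smul]
    rw [shifted, h _ (Nat.le_add_left s n)]
    refine sum_nbij' (fun j => (j + s).toNat) (fun i => (i : ℤ) - s) ?_ ?_ ?_ ?_ ?_
    · simp only [mem_Icc, mem_range]; lia
    · simp only [mem_Icc, mem_range]; lia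
    · simp only [mem_Icc]; lia
    · simp
    · intro j hj
      rw [mem_Icc] at hj
      rw [taylor_eval, ← Nat.cast_add]
      congr 3 <;> lia

end ShiftOperator

theorem aeval_mulLeft_X {K : Type*} [CommSemiring K] (p : K[X]) :
    aeval (LinearMap.mulLeft K (PowerSeries.X : K⟦X⟧)) p = LinearMap.mulLeft K (p : K⟦X⟧) :=
  (aeval_algHom_apply (Algebra.lmul K K⟦X⟧) _ p).trans (congrArg _ p.eval₂_C_X_eq_coe)

open ShiftOperator in
theorem X_and_M_imply_D_general {K : Type*} [CommRing K] [IsDomain K] (φ : ℕ → K⟦X⟧)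
    (hX : ∃ (m ℓ : ℕ) (A B : ℕ → K[X]), (¬ ∀ i ≤ m, A i = 0) ∧ ∀ n : ℕ,
      ∑ i ∈ range (m + 1), (A i).eval (n : K) • (PowerSeries.X * φ (n + i)) =
        ∑ j ∈ range (ℓ + 1), (B j).eval (n : K) • φ (n + j))
    (hM : ∃ (π : K[X]) (s t : ℕ) (E : ℤ → K[X]), π ≠ 0 ∧ ∀ n : ℕ, s ≤ n →
      (π : K⟦X⟧) * PowerSeries.derivative K (φ n) =
        ∑ j ∈ Icc (-(s : ℤ)) (t : ℤ), (E j).eval (n : K) • φ ((n : ℤ) + j).toNat) :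
    ∃ (r u : ℕ) (C D : ℕ → K[X]), (¬ ∀ i ≤ r, C i = 0) ∧ ∀ n : ℕ,
      PowerSeries.derivative K (∑ i ∈ range (r + 1), (C i).eval (n : K) • φ (n + i)) =
        ∑ j ∈ range (u + 1), (D j).eval (n : K) • φ (n + j) := by
  obtain ⟨π, s, t, E, hπ, hE⟩ := hM
  let mulX := LinearMap.mulLeft K (PowerSeries.X : K⟦X⟧)
  let mulπ := LinearMap.mulLeft K (π : K⟦X⟧)
  let derivative := (PowerSeries.derivative K).toLinearMap
  let T := oreSaturation (ShiftOperator K)⁰ (ShiftOperator K ∙ φ)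
  have mulX_mem : mapSequence mulX φ ∈ T := mem_oreSaturation_span_singleton_iff.2 hX
  have mulπ_mem : mapSequence mulπ φ ∈ T := by
    simpa only [mulX, aeval_mulLeft_X] using mapSequence_aeval_mem mulX_mem π
  have mulπ_derivative_mem : mapSequence mulπ (mapSequence derivative φ) ∈ T :=
    mem_oreSaturation_of_eq_sum_Icc hE
  have mulπ_injective : Function.Injective mulπ :=
    mul_right_injective₀ (Polynomial.coe_eq_zero_iff.not.2 hπ)
  have derivative_mem : mapSequence derivative φ ∈ T :=
    oreSaturation.mem_of_map_mem (mapSequence_injective mulπ_injective) mulπ_mem mulπ_derivative_mem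
  obtain ⟨r, u, C, D, hC, hCD⟩ := mem_oreSaturation_span_singleton_iff.1 derivative_mem
  refine ⟨r, u, C, D, hC, fun n => ?_⟩
  rw [← hCD]
  change derivative _ = _
  simp_rw [map_sum, map_smul]
  rfl

/-- Proposition 6.1: if a family `(φ_n)` of formal power series satisfies a
relation of type (X) (a linear recurrence in `n` whose coefficients are
polynomials of degree at most 1 in `x`) and a relation of type (M) (a mixed
difference-differential equation `π(x) φ_n' = Σ E_j(n) φ_{n+j}`), then it
satisfies a relation of type (D): `(Σ C_i(n) φ_{n+i})' = Σ D_j(n) φ_{n+j}`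
for all sufficiently large `n`. -/
theorem X_and_M_imply_D (φ : ℕ → PowerSeries ℂ)
    (hX : ∃ (m ℓ : ℕ) (A B : ℕ → Polynomial ℂ),
      (¬ ∀ i ≤ m, A i = 0) ∧
      ∀ n : ℕ,
        ∑ i ∈ range (m + 1), (A i).eval (n : ℂ) • (PowerSeries.X * φ (n + i)) =
          ∑ j ∈ range (ℓ + 1), (B j).eval (n : ℂ) • φ (n + j))
    (hM : ∃ (π : Polynomial ℂ) (s t : ℕ) (E : ℤ → Polynomial ℂ),
      π ≠ 0 ∧
      ∀ n : ℕ, s ≤ n →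
        (π : PowerSeries ℂ) * PowerSeries.derivativeFun (φ n) =
          ∑ j ∈ Finset.Icc (-(s : ℤ)) (t : ℤ),
            (E j).eval (n : ℂ) • φ ((n : ℤ) + j).toNat) :
    ∃ (r u : ℕ) (C D : ℕ → Polynomial ℂ),
      (¬ ∀ i ≤ r, C i = 0) ∧
      ∃ N : ℕ, ∀ n : ℕ, N ≤ n →
        PowerSeries.derivativeFun
            (∑ i ∈ range (r + 1), (C i).eval (n : ℂ) • φ (n + i)) =
          ∑ j ∈ range (u + 1), (D j).eval (n : ℂ) • φ (n + j) :=
  have ⟨r, u, P, Q, hP, hPQ⟩ := X_and_M_imply_D_general φ hX hM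
  ⟨r, u, P, Q, hP, 0, fun n _ => hPQ n⟩
end
end

section
/- For every n ∈ ℕ, the following identity holds in ℂ[[x]]: (1−x)^{2n+1} · Σ_{k≥0} ((n+1)_k)²/(k!)² · x^k = Σ_{i=0}^{n} binom(n,i)² · x^i. Equivalently, Φ_n(x) := ₂F₁(n+1,n+1;1;x) satisfies Φ_n(x) = ( Σ_{i=0}^{n} binom(n,i)² x^i ) / (1−x)^{2n+1}. -/
noncomputable section

open Finset PowerSeries

/-- `Φ_n(x) = ₂F₁(n+1,n+1;1;x) = Σ_{k≥0} ((n+1)_k)²/(k!)² x^k`. -/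
def Phi (n : ℕ) : PowerSeries ℂ :=
  PowerSeries.mk fun k => (poch ((n : ℂ) + 1) k) ^ 2 / ((Nat.factorial k : ℂ)) ^ 2

/-!
Over any commutative ring and for all `m`, `n`, apply the Vandermonde identity
`binom(n+k,n) = Σ_j binom(n,j) binom(k,j)` twice. Applied to one factor of the coefficient
`binom(m+k,m) binom(n+k,n)`, it expands the series in the powers `x^j / (1-x)^{n+j+1}`, each of
which is cleared by `(1-x)^{m+n+1}`; this leaves the polynomial
`Σ_j binom(m,j) binom(n+j,n) x^j (1-x)^{m-j}`. Applied to `binom(n+j,n)`, it splits this polynomial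
into multiples of `x^i (x + (1-x))^{m-i} = x^i`.
-/

theorem add_choose_left_eq_sum (m k : ℕ) :
    (m + k).choose m = ∑ j ∈ range (m + 1), m.choose j * k.choose j := by
  rw [add_comm m k, Nat.add_choose_eq, Nat.sum_antidiagonal_eq_sum_range_succ_mk]
  refine sum_congr rfl fun j hj ↦ ?_
  rw [Nat.choose_symm (mem_range_succ_iff.mp hj), mul_comm]

theorem add_choose_mul_choose (n k j : ℕ) :
    (n + k).choose n * k.choose j = (n + j).choose n * (n + k).choose (n + j) := by
  simpa [mul_comm] using (Nat.choose_mul (n := n + k) (Nat.le_add_right n j)).symm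

theorem sum_choose_mul_choose_mul_pow {R : Type*} [CommSemiring R] (x y : R) (m i : ℕ) :
    ∑ j ∈ range (m + 1), (m.choose j * j.choose i : R) * x ^ j * y ^ (m - j) =
      m.choose i * x ^ i * (x + y) ^ (m - i) := by
  obtain him | hmi := le_or_gt i m
  · obtain ⟨l, rfl⟩ := Nat.exists_eq_add_of_le him
    have below_diagonal : ∀ j ∈ range i,
        ((i + l).choose j * j.choose i : R) * x ^ j * y ^ (i + l - j) = 0 := fun j hj ↦ by
      simp [Nat.choose_eq_zero_of_lt (mem_range.mp hj)]
    have trinomial_revision (j : ℕ) : ((i + l).choose (i + j) * (i + j).choose i : R) =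
        (i + l).choose i * l.choose j := by
      rw [mul_comm]
      exact_mod_cast congrArg (Nat.cast (R := R)) (add_choose_mul_choose i l j).symm
    rw [add_assoc, sum_range_add, sum_eq_zero below_diagonal, zero_add, Nat.add_sub_cancel_left,
      add_pow, mul_sum]
    refine sum_congr rfl fun j _ ↦ ?_
    rw [trinomial_revision, Nat.add_sub_add_left]
    ring
  · rw [Nat.choose_eq_zero_of_lt hmi, Nat.cast_zero, zero_mul, zero_mul]
    refine sum_eq_zero fun j hj ↦ ?_
    rw [Nat.choose_eq_zero_of_lt ((mem_range_succ_iff.mp hj).trans_lt hmi)]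
    simp

theorem sum_choose_mul_add_choose_mul_pow {R : Type*} [CommSemiring R] (x y : R) (m n : ℕ) :
    ∑ j ∈ range (m + 1), (m.choose j * (n + j).choose n : R) * x ^ j * y ^ (m - j) =
      ∑ i ∈ range (n + 1), (m.choose i * n.choose i : R) * x ^ i * (x + y) ^ (m - i) := by
  calc ∑ j ∈ range (m + 1), (m.choose j * (n + j).choose n : R) * x ^ j * y ^ (m - j)
    _ = ∑ j ∈ range (m + 1), ∑ i ∈ range (n + 1),
          (n.choose i : R) * ((m.choose j * j.choose i : R) * x ^ j * y ^ (m - j)) := by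
      refine sum_congr rfl fun j _ ↦ ?_
      rw [add_choose_left_eq_sum, Nat.cast_sum, mul_sum, sum_mul, sum_mul]
      refine sum_congr rfl fun i _ ↦ ?_
      push_cast
      ring
    _ = ∑ i ∈ range (n + 1), (m.choose i * n.choose i : R) * x ^ i * (x + y) ^ (m - i) := by
      rw [sum_comm]
      refine sum_congr rfl fun i _ ↦ ?_
      rw [← mul_sum, sum_choose_mul_choose_mul_pow]
      ring

section CommRing

variable (R : Type*) [CommRing R]

theorem one_sub_pow_mul_mk_add_choose_add (n j : ℕ) :
    (1 - X : R⟦X⟧) ^ (n + j + 1) * mk (fun k ↦ ((n + k).choose (n + j) : R)) = X ^ j := by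
  have shift : mk (fun k ↦ ((n + k).choose (n + j) : R)) =
      X ^ j * PowerSeries.mk (fun k ↦ ((n + j + k).choose (n + j) : R)) := by
    ext k
    rw [coeff_X_pow_mul', coeff_mk]
    split_ifs with hjk
    · rw [coeff_mk, add_assoc, Nat.add_sub_cancel' hjk]
    · rw [Nat.choose_eq_zero_of_lt (by lia), Nat.cast_zero]
  rw [shift, mul_left_comm, mul_comm ((1 - X) ^ _), mk_add_choose_mul_one_sub_pow_eq_one, mul_one]

theorem mk_add_choose_mul_add_choose_eq_sum (m n : ℕ) :
    mk (fun k ↦ ((m + k).choose m * (n + k).choose n : R)) =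
      ∑ j ∈ range (m + 1), (m.choose j * (n + j).choose n : R) •
        mk (fun k ↦ ((n + k).choose (n + j) : R)) := by
  ext k
  have expand : (m + k).choose m * (n + k).choose n =
      ∑ j ∈ range (m + 1), m.choose j * (n + j).choose n * (n + k).choose (n + j) := by
    rw [add_choose_left_eq_sum, sum_mul]
    refine sum_congr rfl fun j _ ↦ ?_
    rw [mul_assoc, mul_assoc, mul_comm (k.choose j), add_choose_mul_choose]
  simp only [map_sum, coeff_smul, coeff_mk, smul_eq_mul]
  exact_mod_cast congrArg (Nat.cast (R := R)) expand

theorem one_sub_pow_mul_mk_add_choose_mul_add_choose (m n : ℕ) :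
    (1 - X : R⟦X⟧) ^ (m + n + 1) * mk (fun k ↦ ((m + k).choose m * (n + k).choose n : R)) =
      ∑ j ∈ range (m + 1), (m.choose j * (n + j).choose n : R⟦X⟧) * X ^ j * (1 - X) ^ (m - j) := by
  rw [mk_add_choose_mul_add_choose_eq_sum, mul_sum]
  refine sum_congr rfl fun j hj ↦ ?_
  have hjm : j ≤ m := mem_range_succ_iff.mp hj
  rw [← one_sub_pow_mul_mk_add_choose_add R n j,
    show m + n + 1 = (n + j + 1) + (m - j) by lia, pow_add, smul_eq_C_mul, map_mul, map_natCast,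
    map_natCast]
  ring

theorem one_sub_pow_mul_Phi_general (m n : ℕ) :
    (1 - X : R⟦X⟧) ^ (m + n + 1) * mk (fun k ↦ ((m + k).choose m * (n + k).choose n : R)) =
      ∑ i ∈ range (n + 1), (m.choose i * n.choose i : R) • (X : R⟦X⟧) ^ i := by
  rw [one_sub_pow_mul_mk_add_choose_mul_add_choose, sum_choose_mul_add_choose_mul_pow]
  simp only [add_sub_cancel, one_pow, mul_one, smul_eq_C_mul, map_mul, map_natCast]

end CommRing

theorem poch_natCast (n k : ℕ) : poch n k = n.ascFactorial k := by
  induction k with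
  | zero => simp [poch]
  | succ k ih => rw [poch, ih, Nat.ascFactorial_succ]; push_cast; ring

theorem poch_natCast_add_one_div_factorial (n k : ℕ) :
    poch ((n : ℂ) + 1) k / (k.factorial : ℂ) = (n + k).choose n := by
  have hk : (k.factorial : ℂ) ≠ 0 := Nat.cast_ne_zero.mpr k.factorial_ne_zero
  rw [← Nat.cast_succ, poch_natCast, Nat.ascFactorial_eq_factorial_mul_choose, Nat.cast_mul,
    mul_div_cancel_left₀ _ hk, Nat.choose_symm_add]

theorem Phi_eq_mk_choose (n : ℕ) :
    Phi n = mk fun k ↦ ((n + k).choose n * (n + k).choose n : ℂ) := by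
  simp only [Phi, ← div_pow, poch_natCast_add_one_div_factorial, ← sq]

/-- `(1−x)^{2n+1} Φ_n(x) = Σ_{i=0}^{n} binom(n,i)² x^i` in `ℂ[[x]]`. -/
theorem one_sub_pow_mul_Phi (n : ℕ) :
    (1 - PowerSeries.X : PowerSeries ℂ) ^ (2 * n + 1) * Phi n =
      ∑ i ∈ range (n + 1), ((n.choose i : ℂ)) ^ 2 • (PowerSeries.X : PowerSeries ℂ) ^ i := by
  simpa only [Phi_eq_mk_choose, two_mul, sq] using one_sub_pow_mul_Phi_general ℂ n n
end
end

section
/- For n ∈ ℕ, let Φ_n(x) = ₂F₁(n+1,n+1;1;x) = Σ_{k≥0} ((n+1)_k)²/(k!)² x^k ∈ ℂ[[x]]. Let n, t, s ∈ ℕ with t ≤ n and s ≤ n, and let A_0,…,A_t, B_0,…,B_s ∈ ℂ be such that Σ_{m=0}^{t} A_m·Φ_{n−m}(x) = x·Σ_{m=0}^{s} B_m·Φ_{n−m}(x) as formal power series. Then A_0 = 0 and B_0 = 0. (Consequently, the family (Φ_n) satisfies no nontrivial relation of type (X), i.e., no linear recurrence in n whose coefficients are polynomials of degree at most 1 in x.)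 -/
/-! The coefficient of `x ^ k` in `Φ_j` is `((k + j).choose j) ^ 2`, a polynomial in `k` of degree
`2 * j`. So the two sums in the relation have polynomial coefficient sequences `P` and `Q`, which
for `1 ≤ n` are `A 0` and `B 0` times the polynomial of `Φ_n` up to terms of degree at most
`2 * n - 2`, and multiplication by `x` turns the relation into `P (k + 1) = Q k`. A unit shift keeps
the leading coefficient, hence `A 0 = B 0` and `P (k + 1) - P k = Q k - P k` has degree at most
`2 * n - 2`. But differencing lowers the degree by exactly one, so the coefficient of degree `2 * n`
in `P` vanishes. -/

noncomputable section

open Finset PowerSeries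

open scoped Polynomial

section Taylor

theorem coeff_taylor_of_natDegree_le_succ {R : Type*} [Semiring R] {p : R[X]} {d : ℕ}
    (hp : p.natDegree ≤ d + 1) (r : R) :
    (p.taylor r).coeff d = p.coeff d + (d + 1) * p.coeff (d + 1) * r := by
  have hdeg : (Polynomial.hasseDeriv d p).natDegree ≤ 1 :=
    (p.natDegree_hasseDeriv_le d).trans (by omega)
  rw [Polynomial.taylor_coeff, Polynomial.eval_eq_sum_range' (Nat.lt_succ_of_le hdeg),
    sum_range_succ, sum_range_one, Polynomial.hasseDeriv_coeff, Polynomial.hasseDeriv_coeff]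
  simp [add_comm 1 d]

theorem coeff_taylor_of_natDegree_le {R : Type*} [Semiring R] {p : R[X]} {d : ℕ}
    (hp : p.natDegree ≤ d) (r : R) : (p.taylor r).coeff d = p.coeff d := by
  rw [coeff_taylor_of_natDegree_le_succ (hp.trans d.le_succ),
    Polynomial.coeff_eq_zero_of_natDegree_lt (Nat.lt_succ_of_le hp), mul_zero, zero_mul, add_zero]

theorem eq_zero_of_taylor_smul_add_eq {K : Type*} [CommRing K] [IsDomain K] [CharZero K]
    {p u v : K[X]} {a b r : K} (hr : r ≠ 0) (hu : u.natDegree + 1 < p.natDegree)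
    (hv : v.natDegree + 1 < p.natDegree)
    (h : (a • p + u).taylor r = b • p + v) : a = 0 ∧ b = 0 := by
  obtain ⟨d, hd⟩ : ∃ d, p.natDegree = d + 1 := ⟨p.natDegree - 1, by omega⟩
  have hlead : p.coeff (d + 1) ≠ 0 := by
    rw [← hd, Polynomial.coeff_natDegree, Polynomial.leadingCoeff_ne_zero]
    rintro rfl
    simp at hd
  have hcoeff {w : K[X]} (hw : w.natDegree + 1 < p.natDegree) (c : K) {e : ℕ} (he : d ≤ e) :
      (c • p + w).coeff e = c * p.coeff e := by
    rw [Polynomial.coeff_add, Polynomial.coeff_smul, smul_eq_mul,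
      Polynomial.coeff_eq_zero_of_natDegree_lt (show w.natDegree < e by omega), add_zero]
  have hdeg : (a • p + u).natDegree ≤ d + 1 :=
    Polynomial.natDegree_add_le_of_degree_le
      ((Polynomial.natDegree_smul_le a p).trans hd.le) (by omega)
  obtain rfl : a = b := by
    have htop := congrArg (Polynomial.coeff · (d + 1)) h
    simp only [coeff_taylor_of_natDegree_le hdeg, hcoeff hu a d.le_succ,
      hcoeff hv b d.le_succ] at htop
    exact mul_right_cancel₀ hlead htop
  have hnext : ((d : K) + 1) * (a * p.coeff (d + 1)) * r = 0 := by
    have hsub := congrArg (Polynomial.coeff · d) h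
    simp only [coeff_taylor_of_natDegree_le_succ hdeg, hcoeff hu a le_rfl, hcoeff hv a le_rfl,
      hcoeff hu a d.le_succ] at hsub
    exact add_eq_left.1 hsub
  have ha : a = 0 := by simpa [hr, hlead, Nat.cast_add_one_ne_zero d] using hnext
  exact ⟨ha, ha⟩

end Taylor

section Interpolation

variable {R : Type*}

/-- The polynomial `p` interpolates the coefficient sequence of the power series `f`: the
coefficient of `x ^ k` in `f` is `p k` for every natural number `k`. -/
def Interpolates [Semiring R] (p : R[X]) (f : R⟦X⟧) : Prop :=
  ∀ k : ℕ, coeff k f = p.eval (k : R)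

theorem Interpolates.sum_smul [Semiring R] {ι : Type*} {p : ι → R[X]} {f : ι → R⟦X⟧}
    (s : Finset ι) (c : ι → R) (h : ∀ i ∈ s, Interpolates (p i) (f i)) :
    Interpolates (∑ i ∈ s, c i • p i) (∑ i ∈ s, c i • f i) := fun k => by
  rw [map_sum, Polynomial.eval_finsetSum]
  refine sum_congr rfl fun i hi => ?_
  rw [PowerSeries.coeff_smul, Polynomial.eval_smul, h i hi k]

theorem Interpolates.taylor_one_eq [CommRing R] [IsDomain R] [CharZero R] {p q : R[X]} {f : R⟦X⟧}
    (hp : Interpolates p (PowerSeries.X * f)) (hq : Interpolates q f) : p.taylor 1 = q := by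
  refine Polynomial.eq_of_infinite_eval_eq _ _
    ((Set.infinite_range_of_injective (Nat.cast_injective (R := R))).mono ?_)
  rintro _ ⟨k, rfl⟩
  calc (p.taylor 1).eval (k : R) = p.eval ((k + 1 : ℕ) : R) := by
        rw [Polynomial.taylor_eval, Nat.cast_succ]
    _ = q.eval (k : R) := by rw [← hp, coeff_succ_X_mul, hq]

end Interpolation

section Phi

theorem poch_natCast_add_one (n k : ℕ) :
    poch ((n : ℂ) + 1) k = ((n + 1).ascFactorial k : ℂ) := by
  induction k with
  | zero => simp [poch]
  | succ k ih => rw [poch, ih, Nat.ascFactorial_succ]; push_cast; ring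

theorem coeff_Phi (n k : ℕ) : coeff k (Phi n) = ((k + n).choose n : ℂ) ^ 2 := by
  have hk : (k.factorial : ℂ) ≠ 0 := Nat.cast_ne_zero.2 k.factorial_ne_zero
  rw [Phi, coeff_mk, poch_natCast_add_one, Nat.ascFactorial_eq_factorial_mul_choose, ← div_pow,
    Nat.cast_mul, mul_div_cancel_left₀ _ hk, Nat.add_comm n,
    Nat.choose_symm_add]

/-- The polynomial `((X + 1) ⋯ (X + n) / n!) ^ 2`, whose value at `k` is the coefficient of `x ^ k`
in `Φ_n`. -/
def phiPoly (n : ℕ) : ℂ[X] :=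
  Polynomial.preHilbertPoly ℂ n 0 ^ 2

theorem interpolates_Phi (n : ℕ) : Interpolates (phiPoly n) (Phi n) := fun k => by
  rw [coeff_Phi, phiPoly, Polynomial.eval_pow,
    Polynomial.preHilbertPoly_eq_choose_sub_add ℂ n k.zero_le, Nat.sub_zero]

theorem natDegree_phiPoly (n : ℕ) : (phiPoly n).natDegree = 2 * n := by
  rw [phiPoly, Polynomial.natDegree_pow, Polynomial.natDegree_preHilbertPoly]

theorem natDegree_sum_smul_phiPoly_le {ι : Type*} (s : Finset ι) (c : ι → ℂ) (j : ι → ℕ) {n : ℕ}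
    (hj : ∀ i ∈ s, j i ≤ n) : (∑ i ∈ s, c i • phiPoly (j i)).natDegree ≤ 2 * n :=
  Polynomial.natDegree_sum_le_of_forall_le _ _ fun i hi =>
    (Polynomial.natDegree_smul_le _ _).trans <| by
      rw [natDegree_phiPoly]
      exact Nat.mul_le_mul_left 2 (hj i hi)

theorem exists_interpolates_sum_smul_Phi (n t : ℕ) (A : ℕ → ℂ) :
    ∃ u : ℂ[X], u.natDegree ≤ 2 * n ∧
      Interpolates (A 0 • phiPoly (n + 1) + u) (∑ m ∈ range (t + 1), A m • Phi (n + 1 - m)) := by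
  refine ⟨∑ m ∈ range t, A (m + 1) • phiPoly (n + 1 - (m + 1)),
    natDegree_sum_smul_phiPoly_le _ _ _ fun m _ => by omega, ?_⟩
  have hsum := Interpolates.sum_smul (range (t + 1)) A fun m _ => interpolates_Phi (n + 1 - m)
  rwa [sum_range_succ' fun m => A m • phiPoly (n + 1 - m), add_comm] at hsum

end Phi

/-- The family `(Φ_n)` satisfies no nontrivial relation of type (X): if
`Σ_{m=0}^{t} A_m Φ_{n−m} = x Σ_{m=0}^{s} B_m Φ_{n−m}` with `t, s ≤ n`, then
`A_0 = 0` and `B_0 = 0`. -/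
theorem Phi_no_X_relation (n t s : ℕ) (ht : t ≤ n) (hs : s ≤ n)
    (A B : ℕ → ℂ)
    (hrel : ∑ m ∈ range (t + 1), A m • Phi (n - m) =
      PowerSeries.X * ∑ m ∈ range (s + 1), B m • Phi (n - m)) :
    A 0 = 0 ∧ B 0 = 0 := by
  cases n with
  | zero =>
    obtain rfl := Nat.le_zero.1 ht
    obtain rfl := Nat.le_zero.1 hs
    have hA : A 0 = 0 := by simpa [coeff_Phi] using congrArg (coeff 0) hrel
    have hAB : A 0 = B 0 := by simpa [coeff_Phi, coeff_succ_X_mul] using congrArg (coeff 1) hrel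
    exact ⟨hA, hAB ▸ hA⟩
  | succ n =>
    obtain ⟨u, hu, hP⟩ := exists_interpolates_sum_smul_Phi n t A
    obtain ⟨v, hv, hQ⟩ := exists_interpolates_sum_smul_Phi n s B
    have hshift : (A 0 • phiPoly (n + 1) + u).taylor 1 = B 0 • phiPoly (n + 1) + v :=
      (hrel ▸ hP).taylor_one_eq hQ
    have hdeg := natDegree_phiPoly (n + 1)
    exact eq_zero_of_taylor_smul_add_eq one_ne_zero (by omega) (by omega) hshift
end
end

section
/- For an integer n ≥ 1, let F_n(x) = ₁F₂(n+2; n, 1; x) = Σ_{k≥0} (n+k)(n+k+1)/(n(n+1)·(k!)²) · x^k ∈ ℂ[[x]]. Define the operators on sequences (G_n)_{n≥1} of formal power series: (T G)_n = ((n+2)/n)·G_{n+1} − G_n and (Δ G)_n = G_{n+1} − G_n. Then the following two identities hold in ℂ[[x]] for every n ≥ 1: (i) (1/2)·(T(T(xF)))_{n+1} = (n+1)·((n+1)/2+1)·(F_{n+2} − F_{n+1}) − n·(n/2+1)·(F_{n+1} − F_n), where xF denotes the sequence (x·F_n); (ii) −(n/2+1)·(F_{n+1}' − F_n') = ((n+2)/(2n))·(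 ((n+3)/(n+1))·F_{n+2} − F_{n+1} ), where ' denotes the formal derivative with respect to x. (These are the type-(X) and type-(D) relations (1/2)S_n((n+2)/n·S_n−1)²(xF_n) = (S_n−1)n(n/2+1)(S_n−1)(F_n) and −(n/2+1)(S_n−1)(F_n') = ((n+2)/(2n))S_n((n+2)/n·S_n−1)(F_n).) -/
/-!
Let `θ = x d/dx` and `e = ∑ xᵏ / k!²`, so that `θ² e = x e`. Since `(n + k)(n + k + 1)` is the
eigenvalue of `(θ + n)(θ + n + 1)` on `xᵏ`, we have `n(n + 1) Fₙ = Φₙ := (θ + n)(θ + n + 1) e`.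
Multiplication by `n(n + 1)` conjugates `T` into the forward difference `Δ`, and `Φₙ` is a quadratic
polynomial in `n` with `Δ² Φ = 2 e`. Every term of both identities thus becomes a combination of
`e`, `θ e` and `θ² e`, and the relation `θ² e = x e` matches the two sides.
-/

noncomputable section

open Finset PowerSeries

/-- `F_n(x) = ₁F₂(n+2; n, 1; x) = Σ_{k≥0} (n+k)(n+k+1)/(n(n+1)(k!)²) x^k`. -/
def Fser (n : ℕ) : PowerSeries ℂ :=
  PowerSeries.mk fun k =>
    (((n : ℂ) + k) * ((n : ℂ) + k + 1)) /
      ((n : ℂ) * ((n : ℂ) + 1) * ((Nat.factorial k : ℂ)) ^ 2)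

/-- The operator `(T G)_n = ((n+2)/n) G_{n+1} − G_n`. -/
def Tmix (G : ℕ → PowerSeries ℂ) : ℕ → PowerSeries ℂ := fun n =>
  (((n : ℂ) + 2) / (n : ℂ)) • G (n + 1) - G n

/-- The operator `(Δ G)_n = G_{n+1} − G_n`. -/
def Dmix (G : ℕ → PowerSeries ℂ) : ℕ → PowerSeries ℂ := fun n =>
  G (n + 1) - G n

section EulerDeriv

variable (R : Type*) [CommSemiring R]

/-- The Euler operator `θ = x d/dx` on formal power series, as a derivation. It turns the dependence
of coefficients on their index `k` into a differential operator. -/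
def eulerDeriv : Derivation R R⟦X⟧ R⟦X⟧ :=
  (X : R⟦X⟧) • d⁄dX R

theorem eulerDeriv_apply (f : R⟦X⟧) : eulerDeriv R f = X * d⁄dX R f :=
  rfl

theorem coeff_eulerDeriv (f : R⟦X⟧) (k : ℕ) : coeff k (eulerDeriv R f) = k * coeff k f := by
  rw [eulerDeriv_apply]
  cases k with
  | zero => simp
  | succ k => rw [coeff_succ_X_mul, coeff_derivative, Nat.cast_succ, mul_comm]

end EulerDeriv

section BesselSeries

variable (K : Type*) [Field K]

/-- The series `e = ∑ xᵏ / k!²`, which is `₀F₁(; 1; x)` and the expansion of the modified Bessel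
function `I₀(2√x)`; all the `Fser n` are combinations of its images under powers of `eulerDeriv`. -/
def besselSeries : K⟦X⟧ :=
  PowerSeries.mk fun k => ((k.factorial : K) ^ 2)⁻¹

variable [CharZero K]

theorem derivative_eulerDeriv_besselSeries :
    d⁄dX K (eulerDeriv K (besselSeries K)) = besselSeries K := by
  ext k
  have hk : (k : K) + 1 ≠ 0 := Nat.cast_add_one_ne_zero k
  have hfact : (k.factorial : K) ≠ 0 := Nat.cast_ne_zero.mpr k.factorial_ne_zero
  simp only [coeff_derivative, coeff_eulerDeriv, besselSeries, coeff_mk, Nat.factorial_succ,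
    Nat.cast_mul, Nat.cast_succ]
  field_simp

theorem eulerDeriv_eulerDeriv_besselSeries :
    eulerDeriv K (eulerDeriv K (besselSeries K)) = X * besselSeries K := by
  rw [eulerDeriv_apply, derivative_eulerDeriv_besselSeries]

theorem derivative_eulerDeriv_eulerDeriv_besselSeries :
    d⁄dX K (eulerDeriv K (eulerDeriv K (besselSeries K))) =
      besselSeries K + eulerDeriv K (besselSeries K) := by
  rw [eulerDeriv_eulerDeriv_besselSeries, Derivation.leibniz, derivative_X, eulerDeriv_apply,
    smul_eq_mul, smul_eq_mul, mul_one, add_comm]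

end BesselSeries

section DifferenceOperators

variable (G : ℕ → ℂ⟦X⟧)

theorem Dmix_mul_left (f : ℂ⟦X⟧) : Dmix (fun n => f * G n) = fun n : ℕ => f * Dmix G n :=
  funext fun _ => (mul_sub _ _ _).symm

theorem Tmix_inv_smul :
    Tmix (fun n : ℕ => ((n : ℂ) * (n + 1))⁻¹ • G n) =
      fun n : ℕ => ((n : ℂ) * (n + 1))⁻¹ • Dmix G n := by
  funext n
  rcases eq_or_ne n 0 with rfl | hn
  · -- Division by zero makes both `(n + 2) / n` and `(n * (n + 1))⁻¹` equal to `0` here.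
    simp [Tmix]
  have h₀ : (n : ℂ) ≠ 0 := Nat.cast_ne_zero.mpr hn
  have h₁ : (n : ℂ) + 1 ≠ 0 := Nat.cast_add_one_ne_zero n
  have h₂ : (n : ℂ) + 1 + 1 ≠ 0 := by norm_cast
  simp only [Tmix, Dmix, Nat.cast_succ]
  match_scalars <;> field_simp
  ring

end DifferenceOperators

section ClearedFser

local notation "θ" => eulerDeriv ℂ
local notation "e" => besselSeries ℂ

/-- The series `Φₙ = n(n + 1) Fₙ = (θ + n)(θ + n + 1) e`, with its denominators in `n` cleared and
expanded in powers of `θ`. -/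
def clearedFser (n : ℕ) : ℂ⟦X⟧ :=
  θ (θ e) + (2 * n + 1 : ℂ) • θ e + ((n : ℂ) * (n + 1)) • e

theorem Fser_eq_inv_smul_clearedFser :
    Fser = fun n : ℕ => ((n : ℂ) * (n + 1))⁻¹ • clearedFser n := by
  ext n k
  simp only [Fser, clearedFser, map_add, coeff_smul, coeff_eulerDeriv, besselSeries, coeff_mk,
    smul_eq_mul, div_eq_mul_inv, mul_inv]
  ring

theorem Dmix_clearedFser :
    Dmix clearedFser = fun n : ℕ => (2 : ℂ) • (θ e + ((n : ℂ) + 1) • e) := by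
  funext n
  simp only [Dmix, clearedFser, Nat.cast_succ]
  module

theorem Dmix_Dmix_clearedFser : Dmix (Dmix clearedFser) = fun _ => (2 : ℂ) • e := by
  rw [Dmix_clearedFser]
  funext n
  simp only [Dmix, Nat.cast_succ]
  module

theorem Tmix_Fser (n : ℕ) :
    Tmix Fser n = (2 / ((n : ℂ) * (n + 1))) • (θ e + ((n : ℂ) + 1) • e) := by
  simp only [Fser_eq_inv_smul_clearedFser, Tmix_inv_smul, Dmix_clearedFser, smul_smul,
    div_eq_inv_mul]

theorem Tmix_Tmix_X_mul_Fser (n : ℕ) :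
    Tmix (Tmix fun k => X * Fser k) n = (2 / ((n : ℂ) * (n + 1))) • θ (θ e) := by
  simp only [Fser_eq_inv_smul_clearedFser, mul_smul_comm, Tmix_inv_smul, Dmix_mul_left,
    Dmix_Dmix_clearedFser, smul_smul, div_eq_inv_mul, eulerDeriv_eulerDeriv_besselSeries]

theorem smul_Fser_succ_sub_Fser {n : ℕ} (hn : n ≠ 0) :
    ((n : ℂ) / 2 + 1) • (Fser (n + 1) - Fser n) =
      -((n : ℂ)⁻¹ • (θ e + ((n : ℂ) + 1)⁻¹ • θ (θ e))) := by
  have h₀ : (n : ℂ) ≠ 0 := Nat.cast_ne_zero.mpr hn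
  have h₁ : (n : ℂ) + 1 ≠ 0 := Nat.cast_add_one_ne_zero n
  have h₂ : (n : ℂ) + 1 + 1 ≠ 0 := by norm_cast
  simp only [Fser_eq_inv_smul_clearedFser, clearedFser, Nat.cast_succ]
  match_scalars <;> field_simp <;> ring

theorem mul_smul_Fser_succ_sub_Fser {n : ℕ} (hn : n ≠ 0) :
    ((n : ℂ) * ((n : ℂ) / 2 + 1)) • (Fser (n + 1) - Fser n) =
      -(θ e + ((n : ℂ) + 1)⁻¹ • θ (θ e)) := by
  rw [mul_smul, smul_Fser_succ_sub_Fser hn, smul_neg, smul_inv_smul₀ (Nat.cast_ne_zero.mpr hn)]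

theorem smul_derivative_Fser_succ_sub_Fser {n : ℕ} (hn : n ≠ 0) :
    ((n : ℂ) / 2 + 1) • (d⁄dX ℂ (Fser (n + 1)) - d⁄dX ℂ (Fser n)) =
      -((n : ℂ)⁻¹ • (e + ((n : ℂ) + 1)⁻¹ • (e + θ e))) := by
  rw [← map_sub, ← Derivation.map_smul, smul_Fser_succ_sub_Fser hn, map_neg, Derivation.map_smul,
    map_add, Derivation.map_smul, derivative_eulerDeriv_besselSeries,
    derivative_eulerDeriv_eulerDeriv_besselSeries]

end ClearedFser

/-- The type-(X) and type-(D) relations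
`(1/2) S_n ((n+2)/n ⋅ S_n − 1)² (x F_n) = (S_n − 1) n (n/2+1) (S_n − 1)(F_n)` and
`−(n/2+1)(S_n − 1)(F_n') = ((n+2)/(2n)) S_n ((n+2)/n ⋅ S_n − 1)(F_n)`. -/
theorem Fser_X_and_D (n : ℕ) (hn : 1 ≤ n) :
    ((1 / 2 : ℂ) • Tmix (Tmix fun k => PowerSeries.X * Fser k) (n + 1) =
      (((n : ℂ) + 1) * (((n : ℂ) + 1) / 2 + 1)) • (Fser (n + 2) - Fser (n + 1)) -
        ((n : ℂ) * ((n : ℂ) / 2 + 1)) • (Fser (n + 1) - Fser n)) ∧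
    (-(((n : ℂ) / 2 + 1)) • (PowerSeries.derivativeFun (Fser (n + 1)) -
        PowerSeries.derivativeFun (Fser n)) =
      (((n : ℂ) + 2) / (2 * (n : ℂ))) •
        ((((n : ℂ) + 3) / ((n : ℂ) + 1)) • Fser (n + 2) - Fser (n + 1))) := by
  have hn₀ : n ≠ 0 := Nat.one_le_iff_ne_zero.mp hn
  have h₀ : (n : ℂ) ≠ 0 := Nat.cast_ne_zero.mpr hn₀
  have h₁ : (n : ℂ) + 1 ≠ 0 := Nat.cast_add_one_ne_zero n
  have h₂ : (n : ℂ) + 1 + 1 ≠ 0 := by norm_cast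
  constructor
  · have hsucc := mul_smul_Fser_succ_sub_Fser n.succ_ne_zero
    rw [Nat.cast_succ] at hsucc
    rw [Tmix_Tmix_X_mul_Fser, hsucc, mul_smul_Fser_succ_sub_Fser hn₀, Nat.cast_succ]
    match_scalars <;> field_simp <;> ring
  · have hT : (((n : ℂ) + 3) / (n + 1)) • Fser (n + 2) - Fser (n + 1) = Tmix Fser (n + 1) := by
      rw [Tmix, Nat.cast_succ, add_assoc (n : ℂ) 1 2]
      norm_num
    change -((n : ℂ) / 2 + 1) • (d⁄dX ℂ (Fser (n + 1)) - d⁄dX ℂ (Fser n)) = _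
    rw [neg_smul, smul_derivative_Fser_succ_sub_Fser hn₀, hT, Tmix_Fser, Nat.cast_succ]
    match_scalars <;> field_simp <;> ring
end
end

section
/- For an integer n ≥ 1, let F_n(x) = ₁F₂(n+2; n, 1; x) = Σ_{k≥0} (n+k)(n+k+1)/(n(n+1)·(k!)²) · x^k ∈ ℂ[[x]]. Then the family (F_n)_{n≥1} satisfies no relation of type (M): there do not exist a nonzero polynomial π ∈ ℂ[x], integers s, t ≥ 0, and rational functions E_{−s},…,E_t ∈ ℂ(n), such that π(x)·F_n'(x) = Σ_{j=−s}^{t} E_j(n)·F_{n+j}(x) holds in ℂ[[x]] for all sufficiently large n (with ' the formal derivative with respect to x). -/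
noncomputable section

open Finset PowerSeries

/-!
With `B q = ∑ q(k) / (k!)² xᵏ`, the operator `x · d/dx` becomes multiplication of `q` by `X`,
multiplication by `x` becomes `T q = X² q(X - 1)`, and `F_n = B pₙ` with `pₙ` quadratic and
`pₙ(0) = 1`. After multiplication by `x`, a relation at a single `n` reads `π(T)(X pₙ) = T r` with
`deg r ≤ 2`. As `T` raises degrees by exactly two, comparing degrees gives `2 deg π + 3 ≤ 4`, so `π`
is a constant; then `X²` divides `π X pₙ`, which forces `π = 0`.
-/

section FactorialSquareSeries

open scoped Polynomial

theorem natDegree_aeval_end_apply {R : Type*} [CommSemiring R] [NoZeroDivisors R]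
    {T : Module.End R R[X]} {e : ℕ} (he : 0 < e)
    (hT : ∀ q : R[X], q ≠ 0 → (T q).natDegree = q.natDegree + e) {p q : R[X]}
    (hp : p ≠ 0) (hq : q ≠ 0) :
    (Polynomial.aeval T p q).natDegree = e * p.natDegree + q.natDegree := by
  induction p using Polynomial.recOnHorner generalizing q with
  | M0 => exact absurd rfl hp
  | MC p a coeff_zero ha ih =>
    have natDegree_smul_q : (a • q).natDegree = q.natDegree := by
      rw [Polynomial.smul_eq_C_mul, Polynomial.natDegree_C_mul ha]
    rcases eq_or_ne p 0 with rfl | hp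
    · simp [natDegree_smul_q]
    · have natDegree_p_pos : 0 < p.natDegree := by
        refine Nat.pos_of_ne_zero fun h => hp ?_
        rw [Polynomial.eq_C_of_natDegree_eq_zero h, coeff_zero, Polynomial.C_0]
      rw [map_add, Polynomial.aeval_C, LinearMap.add_apply, Module.algebraMap_end_apply,
        Polynomial.natDegree_add_C, Polynomial.natDegree_add_eq_left_of_natDegree_lt, ih hp hq]
      rw [natDegree_smul_q, ih hp hq]
      have := Nat.mul_pos he natDegree_p_pos
      lia
  | MX p p_ne_zero ih =>
    have : Nontrivial R := Polynomial.Nontrivial.of_polynomial_ne hq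
    have hTq : T q ≠ 0 := Polynomial.ne_zero_of_natDegree_gt (n := 0) (by rw [hT q hq]; lia)
    rw [map_mul, Polynomial.aeval_X, Module.End.mul_apply, ih p_ne_zero hTq, hT q hq,
      Polynomial.natDegree_mul_X p_ne_zero]
    ring

variable {K : Type*} [Field K]

/-- The series `∑ q(k) / (k!)² xᵏ` attached to a polynomial `q`, that is, `q(x d/dx)` applied to
the Bessel-type series `∑ xᵏ / (k!)²`. -/
def factorialSqSeries : K[X] →ₗ[K] K⟦X⟧ where
  toFun q := PowerSeries.mk fun k => q.eval (k : K) / (k.factorial : K) ^ 2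
  map_add' p q := by ext k; simp [add_div]
  map_smul' c q := by ext k; simp [mul_div_assoc]

@[simp]
theorem coeff_factorialSqSeries (q : K[X]) (k : ℕ) :
    PowerSeries.coeff k (factorialSqSeries q) = q.eval (k : K) / (k.factorial : K) ^ 2 := by
  simp [factorialSqSeries]

theorem X_mul_derivative_factorialSqSeries (q : K[X]) :
    PowerSeries.X * d⁄dX K (factorialSqSeries q) = factorialSqSeries (Polynomial.X * q) := by
  ext (_ | k)
  · simp
  · rw [PowerSeries.coeff_succ_X_mul, PowerSeries.coeff_derivative, coeff_factorialSqSeries,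
      coeff_factorialSqSeries, Polynomial.eval_mul, Polynomial.eval_X]
    push_cast
    ring

/-- The operator `q(X) ↦ X² q(X - 1)`, which is multiplication by `x` transported to the
polynomials `q` parametrizing the series `factorialSqSeries q`. -/
def factorialSqShift : Module.End K K[X] :=
  LinearMap.mulLeft K (Polynomial.X ^ 2) ∘ₗ Polynomial.taylor (-1)

theorem factorialSqShift_apply (q : K[X]) :
    factorialSqShift q = Polynomial.X ^ 2 * Polynomial.taylor (-1) q :=
  rfl

theorem natDegree_factorialSqShift {q : K[X]} (hq : q ≠ 0) :
    (factorialSqShift q).natDegree = q.natDegree + 2 := by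
  have taylor_ne_zero : Polynomial.taylor (-1) q ≠ 0 := by
    rwa [Ne, Polynomial.taylor_eq_zero]
  rw [factorialSqShift_apply, Polynomial.natDegree_X_pow_mul 2 taylor_ne_zero,
    Polynomial.natDegree_taylor]

variable [CharZero K]

theorem factorialSqSeries_injective :
    Function.Injective (factorialSqSeries : K[X] →ₗ[K] K⟦X⟧) := by
  intro p q h
  refine Polynomial.eq_of_infinite_eval_eq p q
    ((Set.infinite_range_of_injective (Nat.cast_injective (R := K))).mono ?_)
  rintro _ ⟨k, rfl⟩
  have factorial_ne_zero : (k.factorial : K) ^ 2 ≠ 0 :=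
    pow_ne_zero 2 (Nat.cast_ne_zero.mpr k.factorial_ne_zero)
  simpa [div_left_inj' factorial_ne_zero] using congrArg (PowerSeries.coeff k) h

theorem X_mul_factorialSqSeries (q : K[X]) :
    PowerSeries.X * factorialSqSeries q = factorialSqSeries (factorialSqShift q) := by
  ext (_ | k)
  · simp [factorialSqShift_apply]
  · have succ_ne_zero : (k : K) + 1 ≠ 0 := Nat.cast_add_one_ne_zero k
    simp [factorialSqShift_apply, PowerSeries.coeff_succ_X_mul, Nat.factorial_succ, mul_pow,
      Polynomial.taylor_eval, mul_div_mul_left, succ_ne_zero]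

theorem coe_mul_factorialSqSeries (p q : K[X]) :
    (p : K⟦X⟧) * factorialSqSeries q =
      factorialSqSeries (Polynomial.aeval factorialSqShift p q) := by
  induction p using Polynomial.induction_on' generalizing q with
  | add p₁ p₂ h₁ h₂ => simp [add_mul, h₁, h₂]
  | monomial i a =>
    have X_pow_mul : (PowerSeries.X : K⟦X⟧) ^ i * factorialSqSeries q =
        factorialSqSeries ((factorialSqShift ^ i) q) := by
      induction i with
      | zero => simp
      | succ i ih =>
        rw [pow_succ', mul_assoc, ih, X_mul_factorialSqSeries, pow_succ', Module.End.mul_apply]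
    simp [← X_pow_mul, mul_assoc, PowerSeries.smul_eq_C_mul,
      ← Polynomial.C_mul_X_pow_eq_monomial]

theorem aeval_factorialSqShift_X_mul_eq {p q r : K[X]}
    (h : (p : K⟦X⟧) * d⁄dX K (factorialSqSeries q) = factorialSqSeries r) :
    Polynomial.aeval factorialSqShift p (Polynomial.X * q) = factorialSqShift r := by
  apply factorialSqSeries_injective
  rw [← coe_mul_factorialSqSeries, ← X_mul_derivative_factorialSqSeries, mul_left_comm, h,
    X_mul_factorialSqSeries]

theorem coe_mul_derivative_factorialSqSeries_ne {p q r : K[X]} (hp : p ≠ 0)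
    (hq : q.eval 0 ≠ 0) (hr : r.natDegree ≤ q.natDegree) :
    (p : K⟦X⟧) * d⁄dX K (factorialSqSeries q) ≠ factorialSqSeries r := by
  intro h
  have relation := aeval_factorialSqShift_X_mul_eq h
  have q_ne_zero : q ≠ 0 := by
    rintro rfl
    simp at hq
  have natDegree_lhs : (Polynomial.aeval factorialSqShift p (Polynomial.X * q)).natDegree =
      2 * p.natDegree + (q.natDegree + 1) := by
    rw [natDegree_aeval_end_apply two_pos (fun _ => natDegree_factorialSqShift) hp
      (mul_ne_zero Polynomial.X_ne_zero q_ne_zero), Polynomial.natDegree_X_mul q_ne_zero]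
  have natDegree_rhs : (factorialSqShift r).natDegree ≤ r.natDegree + 2 := by
    rcases eq_or_ne r 0 with rfl | r_ne_zero
    · simp
    · exact (natDegree_factorialSqShift r_ne_zero).le
  have natDegree_p : p.natDegree = 0 := by
    rw [relation] at natDegree_lhs
    lia
  obtain ⟨a, rfl⟩ := Polynomial.natDegree_eq_zero.mp natDegree_p
  have coeff_one : a * q.eval 0 = 0 := by
    simpa [factorialSqShift_apply, Polynomial.coeff_X_pow_mul', Polynomial.coeff_zero_eq_eval_zero]
      using congrArg (Polynomial.coeff · 1) relation
  exact mul_ne_zero (Polynomial.C_ne_zero.mp hp) hq coeff_one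

end FactorialSquareSeries

section Fser

open scoped Polynomial

/-- The quadratic polynomial `(X + n)(X + n + 1) / (n(n + 1))` with `F_n = ∑ q(k) / (k!)² xᵏ`,
normalized so that its value at `0` is `1` when `n ≠ 0`. -/
def FserPoly (n : ℕ) : ℂ[X] :=
  Polynomial.C ((n * (n + 1) : ℂ)⁻¹) *
    ((Polynomial.X + Polynomial.C (n : ℂ)) * (Polynomial.X + Polynomial.C (n + 1 : ℂ)))

theorem factorialSqSeries_FserPoly (n : ℕ) : factorialSqSeries (FserPoly n) = Fser n := by
  ext k
  rw [coeff_factorialSqSeries, Fser, PowerSeries.coeff_mk, div_mul_eq_div_div]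
  congr 1
  simp only [FserPoly, Polynomial.eval_mul, Polynomial.eval_C, Polynomial.eval_add,
    Polynomial.eval_X]
  ring

theorem natDegree_FserPoly {n : ℕ} (hn : n ≠ 0) : (FserPoly n).natDegree = 2 := by
  have scalar_ne_zero : (n * (n + 1) : ℂ)⁻¹ ≠ 0 :=
    inv_ne_zero (mul_ne_zero (Nat.cast_ne_zero.mpr hn) (Nat.cast_add_one_ne_zero n))
  rw [FserPoly, Polynomial.natDegree_C_mul scalar_ne_zero,
    (Polynomial.monic_X_add_C _).natDegree_mul (Polynomial.monic_X_add_C _),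
    Polynomial.natDegree_X_add_C, Polynomial.natDegree_X_add_C]

theorem eval_zero_FserPoly {n : ℕ} (hn : n ≠ 0) : (FserPoly n).eval 0 = 1 := by
  have : (n : ℂ) + 1 ≠ 0 := Nat.cast_add_one_ne_zero n
  simp only [FserPoly, Polynomial.eval_mul, Polynomial.eval_C, Polynomial.eval_add,
    Polynomial.eval_X, zero_add]
  field_simp

theorem Fser_no_M_relation_general {n : ℕ} (hn : n ≠ 0) {π : ℂ[X]} (hπ : π ≠ 0)
    {ι : Type*} {J : Finset ι} {m : ι → ℕ} (hm : ∀ j ∈ J, m j ≠ 0) (c : ι → ℂ) :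
    (π : ℂ⟦X⟧) * d⁄dX ℂ (Fser n) ≠ ∑ j ∈ J, c j • Fser (m j) := by
  have sum_eq : ∑ j ∈ J, c j • Fser (m j) =
      factorialSqSeries (∑ j ∈ J, c j • FserPoly (m j)) := by
    simp only [map_sum, map_smul, factorialSqSeries_FserPoly]
  have natDegree_sum : (∑ j ∈ J, c j • FserPoly (m j)).natDegree ≤ 2 :=
    Polynomial.natDegree_sum_le_of_forall_le J _ fun j hj =>
      (Polynomial.natDegree_smul_le _ _).trans (natDegree_FserPoly (hm j hj)).le
  rw [sum_eq, ← factorialSqSeries_FserPoly n]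
  refine coe_mul_derivative_factorialSqSeries_ne hπ ?_ ?_
  · rw [eval_zero_FserPoly hn]
    exact one_ne_zero
  · rwa [natDegree_FserPoly hn]

end Fser

/-- The family `(F_n)_{n≥1}` satisfies no relation of type (M): there is no
nonzero polynomial `π` and rational functions `E_{−s},…,E_t` of `n` with
`π(x) F_n' = Σ_{j=−s}^{t} E_j(n) F_{n+j}` for all sufficiently large `n`. -/
theorem Fser_no_M_relation :
    ¬ ∃ (π : Polynomial ℂ) (s t : ℕ) (E : ℤ → RatFunc ℂ) (N : ℕ),
      π ≠ 0 ∧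
      ∀ n : ℕ, N ≤ n → (s:ℕ) + 1 ≤ n →
        (π : PowerSeries ℂ) * PowerSeries.derivativeFun (Fser n) =
          ∑ j ∈ Finset.Icc (-(s : ℤ)) (t : ℤ),
            RatFunc.eval (RingHom.id ℂ) (n : ℂ) (E j) • Fser ((n : ℤ) + j).toNat := by
  rintro ⟨π, s, t, E, N, hπ, h⟩
  refine Fser_no_M_relation_general (by lia) hπ (fun j hj => ?_) _
    (h (N + s + 1) (by lia) (by lia))
  rw [Finset.mem_Icc] at hj
  lia
end
end

section
/- (Mixed difference-differential equation for families I and II.) Let m ≥ 1 and p, q ≥ 0 be integers, λ ∈ ℂ, a_1,…,a_p, b_1,…,b_q ∈ ℂ, and ε₂ ∈ {−1,1}. For n ∈ ℕ, let F_n = {}_pF_{m+q}(a_1,…,a_p; Δ(m;λ+n), b_1,…,b_q; x) if ε₂ = 1 (family I), and F_n = {}_{m+p}F_q(Δ(m;1−λ−n), a_1,…,a_p; b_1,…,b_q; x) if ε₂ = −1 (family II). Assume that for every n ∈ ℕ no lower parameter of F_n is a nonpositive integer, so that each F_n is a well-defined formal power series in ℂ[[x]]. Then for every integer n ≥ 1,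 the identity x·F_n'(x) = ((n+λ−1)/(ε₂·m))·(F_{n−1}(x) − F_n(x)) holds in ℂ[[x]], where ' denotes the formal derivative with respect to x. -/
noncomputable section

open Finset PowerSeries

/-- The generalized hypergeometric series `pFq((a_p); (b_q); x)` as a formal
power series, for upper parameters `as` and lower parameters `bs`. -/
def hyp (as bs : List ℂ) : PowerSeries ℂ :=
  PowerSeries.mk fun k =>
    (as.map fun a => poch a k).prod /
      ((bs.map fun b => poch b k).prod * (Nat.factorial k : ℂ))

/-- `Δ(m;z)`: the list of `m` parameters `z/m, (z+1)/m, …, (z+m−1)/m`. -/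
def Δlist (m : ℕ) (z : ℂ) : List ℂ :=
  (List.range m).map fun j => (z + j) / (m : ℂ)

/-!
Gauss's multiplication formula collapses the parameters `Δ(m;z)` into a single Pochhammer symbol,
`∏_j ((z+j)/m)_k = (z)_{mk} / m^{mk}`, so that `z (z+1)_{mk} = (z+mk) (z)_{mk}` describes the effect
of the shift `z ↦ z + 1` on the `k`-th coefficient of a hypergeometric series. Since `x d/dx`
multiplies this coefficient by `k`, it is `z/m` times the difference of two consecutive series.
Family I is the case `z = λ + n - 1` in the lower parameters, family II the case `z = 1 - λ - n` in
the upper ones.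
-/

lemma coeff_X_mul_derivative {R : Type*} [CommSemiring R] (f : R⟦X⟧) (k : ℕ) :
    coeff k (X * derivative R f) = k * coeff k f := by
  cases k with
  | zero => simp
  | succ k => rw [coeff_succ_X_mul, coeff_derivative, Nat.cast_succ, mul_comm]

lemma poch_eq_prod_range (a : ℂ) (k : ℕ) : poch a k = ∏ i ∈ range k, (a + i) := by
  induction k with
  | zero => rfl
  | succ k ih => rw [poch, ih, prod_range_succ]

lemma poch_ne_zero {a : ℂ} (ha : ∀ i : ℕ, a + i ≠ 0) (k : ℕ) : poch a k ≠ 0 := by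
  rw [poch_eq_prod_range]
  exact prod_ne_zero_iff.mpr fun i _ => ha i

lemma mul_poch_add_one (a : ℂ) (k : ℕ) : a * poch (a + 1) k = (a + k) * poch a k := by
  calc a * poch (a + 1) k
      = ∏ i ∈ range (k + 1), (a + i) := by
        simp only [poch_eq_prod_range, prod_range_succ', Nat.cast_add, Nat.cast_one,
          Nat.cast_zero, add_zero, add_assoc, add_comm (1 : ℂ), mul_comm a]
    _ = (a + k) * poch a k := by rw [prod_range_succ, ← poch_eq_prod_range, mul_comm]

lemma poch_add (a : ℂ) (k l : ℕ) : poch a (k + l) = poch a k * poch (a + k) l := by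
  simp only [poch_eq_prod_range, prod_range_add, Nat.cast_add, add_assoc]

/-- The product `∏ (a)_k` over a list of parameters `a`, which is the contribution of that list to
the `k`-th coefficient of a hypergeometric series. -/
def pochProd (l : List ℂ) (k : ℕ) : ℂ :=
  (l.map fun a => poch a k).prod

lemma pochProd_append (l₁ l₂ : List ℂ) (k : ℕ) :
    pochProd (l₁ ++ l₂) k = pochProd l₁ k * pochProd l₂ k := by
  simp only [pochProd, List.map_append, List.prod_append]

lemma coeff_hyp (as bs : List ℂ) (k : ℕ) :
    coeff k (hyp as bs) = pochProd as k / (pochProd bs k * (k.factorial : ℂ)) :=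
  coeff_mk _ _

-- The index of `Δlist` ranges over `List.range m` coerced to a list of complex numbers.
lemma Δlist_eq_map (m : ℕ) (z : ℂ) :
    Δlist m z = (List.range m).map fun j : ℕ => (z + j) / (m : ℂ) := by
  simp [Δlist, List.map_eq_flatMap, List.flatMap_assoc]

lemma pochProd_Δlist (m : ℕ) (z : ℂ) (k : ℕ) :
    pochProd (Δlist m z) k = ∏ j ∈ range m, poch ((z + j) / m) k := by
  rw [pochProd, Δlist_eq_map, List.map_map]
  rfl

lemma pochProd_Δlist_mul_pow (m : ℕ) (z : ℂ) (k : ℕ) :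
    pochProd (Δlist m z) k * (m : ℂ) ^ (m * k) = poch z (m * k) := by
  induction k with
  | zero => simp [pochProd_Δlist, poch]
  | succ k ih =>
    have factor_mul {j : ℕ} (hj : j ∈ range m) :
        ((z + j) / m + k) * (m : ℂ) = z + ↑(m * k) + j := by
      have hm : (m : ℂ) ≠ 0 := Nat.cast_ne_zero.mpr (Nat.ne_zero_of_lt (mem_range.mp hj))
      push_cast
      field_simp
      ring
    have last_factors :
        (∏ j ∈ range m, ((z + j) / m + k)) * (m : ℂ) ^ m = poch (z + ↑(m * k)) m := by
      rw [poch_eq_prod_range, ← prod_congr rfl fun _ hj => factor_mul hj, prod_mul_distrib,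
        prod_const, card_range]
    have split_last : pochProd (Δlist m z) (k + 1) =
        pochProd (Δlist m z) k * ∏ j ∈ range m, ((z + j) / m + k) := by
      simp only [pochProd_Δlist, poch, prod_mul_distrib]
    rw [split_last, Nat.mul_succ, poch_add, ← ih, ← last_factors, pow_add, mul_mul_mul_comm]

lemma mul_pochProd_Δlist_add_one {m : ℕ} (hm : m ≠ 0) (z : ℂ) (k : ℕ) :
    z * pochProd (Δlist m (z + 1)) k = (z + m * k) * pochProd (Δlist m z) k := by
  have hpow : (m : ℂ) ^ (m * k) ≠ 0 := pow_ne_zero _ (Nat.cast_ne_zero.mpr hm)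
  apply mul_right_cancel₀ hpow
  rw [mul_assoc, mul_assoc, pochProd_Δlist_mul_pow, pochProd_Δlist_mul_pow, mul_poch_add_one,
    Nat.cast_mul]

lemma pochProd_Δlist_ne_zero {z : ℂ} (hz : ∀ i : ℕ, z + i ≠ 0) (m k : ℕ) :
    pochProd (Δlist m z) k ≠ 0 :=
  left_ne_zero_of_mul (pochProd_Δlist_mul_pow m z k ▸ poch_ne_zero hz (m * k))

lemma add_natCast_ne_zero_of_Δlist {m : ℕ} (hm : m ≠ 0) {z : ℂ}
    (h : ∀ a ∈ Δlist m z, ∀ j : ℕ, a + j ≠ 0) (i : ℕ) : z + i ≠ 0 := by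
  have hmem : (z + ↑(i % m)) / m ∈ Δlist m z := by
    rw [Δlist_eq_map]
    exact List.mem_map_of_mem (List.mem_range.mpr (Nat.mod_lt i (Nat.pos_of_ne_zero hm)))
  have hm' : (m : ℂ) ≠ 0 := Nat.cast_ne_zero.mpr hm
  have hdiv : (z + ↑(i % m)) / m + ↑(i / m) = (z + i) / m := by
    nth_rw 3 [← Nat.mod_add_div i m]
    push_cast
    field_simp
    ring
  exact (div_ne_zero_iff.mp (hdiv ▸ h _ hmem (i / m))).1

theorem X_mul_derivative_hyp_Δlist_upper {m : ℕ} (hm : m ≠ 0) (z : ℂ) (as bs : List ℂ) :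
    X * derivative ℂ (hyp (Δlist m z ++ as) bs) =
      (z / m) • (hyp (Δlist m (z + 1) ++ as) bs - hyp (Δlist m z ++ as) bs) := by
  ext k
  have hm' : (m : ℂ) ≠ 0 := Nat.cast_ne_zero.mpr hm
  have upper_shift : k * pochProd (Δlist m z) k =
      z / m * (pochProd (Δlist m (z + 1)) k - pochProd (Δlist m z) k) := by
    field_simp
    linear_combination -mul_pochProd_Δlist_add_one hm z k
  simp only [coeff_X_mul_derivative, coeff_smul, map_sub, coeff_hyp, pochProd_append, smul_eq_mul]
  linear_combination (pochProd as k / (pochProd bs k * k.factorial)) * upper_shift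

theorem X_mul_derivative_hyp_Δlist_lower {m : ℕ} (hm : m ≠ 0) {z : ℂ} (hz : ∀ i : ℕ, z + i ≠ 0)
    (as bs : List ℂ) :
    X * derivative ℂ (hyp as (Δlist m (z + 1) ++ bs)) =
      (z / m) • (hyp as (Δlist m z ++ bs) - hyp as (Δlist m (z + 1) ++ bs)) := by
  ext k
  have hz_succ (i : ℕ) : z + 1 + i ≠ 0 := by
    simpa only [Nat.cast_succ, add_assoc, add_comm (1 : ℂ)] using hz (i + 1)
  have hm' : (m : ℂ) ≠ 0 := Nat.cast_ne_zero.mpr hm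
  have h₀ := pochProd_Δlist_ne_zero hz m k
  have h₁ := pochProd_Δlist_ne_zero hz_succ m k
  have lower_shift : k * (pochProd (Δlist m (z + 1)) k)⁻¹ =
      z / m * ((pochProd (Δlist m z) k)⁻¹ - (pochProd (Δlist m (z + 1)) k)⁻¹) := by
    field_simp
    linear_combination -mul_pochProd_Δlist_add_one hm z k
  simp only [coeff_X_mul_derivative, coeff_smul, map_sub, coeff_hyp, pochProd_append, smul_eq_mul,
    div_eq_mul_inv _ (_ * _ * _), mul_inv]
  linear_combination
    (pochProd as k * (pochProd bs k)⁻¹ * (k.factorial : ℂ)⁻¹) * lower_shift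

/-- Mixed difference-differential equation for families I and II:
`x F_n' = ((n+λ−1)/(ε₂ m)) (F_{n−1} − F_n)`. -/
theorem mixed_relation_families_I_II
    (m : ℕ) (hm : 1 ≤ m) (p q : ℕ) (lam : ℂ)
    (as bs : ℕ → ℂ) (e2 : ℂ) (he2 : e2 = 1 ∨ e2 = -1)
    (F : ℕ → PowerSeries ℂ)
    (hFI : e2 = 1 → ∀ n : ℕ,
      F n = hyp ((List.range p).map as)
        (Δlist m (lam + n) ++ (List.range q).map bs))
    (hFII : e2 = -1 → ∀ n : ℕ,
      F n = hyp (Δlist m (1 - lam - n) ++ (List.range p).map as)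
        ((List.range q).map bs))
    (hlow : ∀ n : ℕ, ∀ z ∈ (if e2 = 1 then Δlist m (lam + n) ++ (List.range q).map bs
        else (List.range q).map bs), ∀ j : ℕ, z + (j : ℂ) ≠ 0) :
    ∀ n : ℕ, 1 ≤ n →
      PowerSeries.X * PowerSeries.derivativeFun (F n) =
        (((n : ℂ) + lam - 1) / (e2 * m)) • (F (n - 1) - F n) := by
  intro n hn
  obtain ⟨n, rfl⟩ := Nat.exists_eq_add_of_le' hn
  have hm' : m ≠ 0 := Nat.ne_zero_of_lt hm
  rcases he2 with rfl | rfl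
  · have hz : ∀ i : ℕ, lam + n + i ≠ 0 := add_natCast_ne_zero_of_Δlist hm' fun a ha =>
      hlow n a (by rw [if_pos rfl]; exact List.mem_append_left _ ha)
    have hshift : lam + ↑(n + 1) = lam + n + 1 := by push_cast; ring
    have hcoeff : (↑(n + 1) + lam - 1) / (1 * m) = (lam + n) / m := by push_cast; ring
    rw [Nat.add_sub_cancel, hFI rfl, hFI rfl, hshift, hcoeff]
    exact X_mul_derivative_hyp_Δlist_lower hm' hz _ _
  · have hshift : 1 - lam - n = 1 - lam - ↑(n + 1) + 1 := by push_cast; ring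
    have hcoeff : (↑(n + 1) + lam - 1) / (-1 * m) = (1 - lam - ↑(n + 1)) / m := by
      rw [neg_one_mul, div_neg, ← neg_div]; ring
    rw [Nat.add_sub_cancel, hFII rfl, hFII rfl, hshift, hcoeff]
    exact X_mul_derivative_hyp_Δlist_upper hm' _ _ _
end
end
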